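/- arXiv:2601.08359 — 2 statements merged into one kernel-verified Lean document; each statement's English description precedes it below -/
import Mathlib

section
/- Let W ⊆ ⟦𝕐⟧ satisfy dim_H(W) < 1/2. Then Player II has a winning pure strategy in the binary Gale–Stewart game with target set W (no measurability assumption on W is needed); in particular, the game with target set W is determined. -/
open Metric Set Filter MeasureTheory

noncomputable local instance : MetricSpace (ℕ → Bool) := PiNat.metricSpace

/-- The finite prefix `⟨x 0, …, x (n-1)⟩` of a play. -/
def prefixList (x : ℕ → Bool) (n : ℕ) : List Bool := List.ofFn fun i : Fin n => x i

/-- `x` is a play consistent with the Player I pure strategy `sI`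
(Player I chooses the bits at even stages). -/
def ConsistentI (sI : List Bool → Bool) (x : ℕ → Bool) : Prop :=
  ∀ n : ℕ, Even n → x n = sI (prefixList x n)

/-- `x` is a play consistent with the Player II pure strategy `sII`
(Player II chooses the bits at odd stages). -/
def ConsistentII (sII : List Bool → Bool) (x : ℕ → Bool) : Prop :=
  ∀ n : ℕ, Odd n → x n = sII (prefixList x n)

/-!
Let Player II play a uniformly random strategy, with an independent fair coin at every position.
Along a fixed play of length `n` she makes `⌊n / 2⌋` moves at distinct positions, so some play
consistent with her strategy lies in a given cylinder of length `n`, a set of diameter at most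
`2⁻ⁿ`, with probability at most `2 ^ (-⌊n / 2⌋) ≤ √2 * (2⁻ⁿ) ^ (1 / 2)`. By subadditivity, some
consistent play lies in `W` with (outer) probability at most `√2 * μH[1 / 2] W`. If this is less
than `1`, then some strategy has no consistent play in `W`.
-/

open scoped ENNReal

section Prefix

theorem length_prefixList (x : ℕ → Bool) (n : ℕ) : (prefixList x n).length = n :=
  List.length_ofFn

theorem prefixList_injective (x : ℕ → Bool) : Function.Injective (prefixList x) :=
  Function.LeftInverse.injective (length_prefixList x)

theorem prefixList_eq_of_mem_cylinder {x y : ℕ → Bool} {n k : ℕ} (h : y ∈ PiNat.cylinder x n)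
    (hk : k ≤ n) : prefixList y k = prefixList x k :=
  congrArg List.ofFn <| funext fun i => h i (i.2.trans_le hk)

end Prefix

section Diameter

attribute [local instance] PiNat.metricSpace

theorem subset_cylinder_succ_of_ediam_lt {E : ℕ → Type*} [∀ n, TopologicalSpace (E n)]
    [∀ n, DiscreteTopology (E n)] {t : Set (∀ n, E n)} {x : ∀ n, E n} {n : ℕ} (hx : x ∈ t)
    (ht : ediam t < 2⁻¹ ^ n) : t ⊆ PiNat.cylinder x (n + 1) := by
  intro y hy i hi
  have hedist : edist y x < 2⁻¹ ^ n := (edist_le_ediam_of_mem hy hx).trans_lt ht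
  refine PiNat.apply_eq_of_dist_lt (n := n) ?_ (Nat.lt_succ_iff.1 hi)
  simpa [edist_dist, ENNReal.ofReal_lt_iff_lt_toReal dist_nonneg] using hedist

theorem exists_subset_cylinder_of_ediam_lt {E : ℕ → Type*} [∀ n, TopologicalSpace (E n)]
    [∀ n, DiscreteTopology (E n)] {t : Set (∀ n, E n)} {x : ∀ n, E n} {r : ℝ≥0∞} (hx : x ∈ t)
    (ht : ediam t < r) : ∃ n, t ⊆ PiNat.cylinder x n ∧ 2⁻¹ ^ n < r := by
  classical
  have hex : ∃ n : ℕ, 2⁻¹ ^ n < r :=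
    ENNReal.exists_inv_two_pow_lt (pos_of_gt ht).ne'
  refine ⟨Nat.find hex, ?_, Nat.find_spec hex⟩
  rcases hn : Nat.find hex with _ | n
  · simp
  · have hr : r ≤ 2⁻¹ ^ n := not_lt.1 (Nat.find_min hex (by omega))
    exact subset_cylinder_succ_of_ediam_lt hx (ht.trans_le hr)

end Diameter

section Coins

/-- The law of a family of independent fair coins indexed by `ι`. On `List Bool → Bool` it is the
law of a uniformly random strategy. -/
noncomputable def coinMeasure (ι : Type*) : Measure (ι → Bool) :=
  Measure.infinitePi fun _ => (PMF.uniformOfFintype Bool).toMeasure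

instance (ι : Type*) : IsProbabilityMeasure (coinMeasure ι) := by
  unfold coinMeasure
  infer_instance

theorem coinMeasure_pi_singleton {ι : Type*} (F : Finset ι) (b : ι → Bool) :
    coinMeasure ι (Set.pi F fun i => {b i}) = 2⁻¹ ^ F.card := by
  rw [coinMeasure, Measure.infinitePi_pi _ fun _ _ => measurableSet_singleton _]
  simp

end Coins

section Reaching

/-- The strategies for Player II having a consistent play in `W`, that is, those that are not
winning for the target set `W`. -/
def reachingStrategies (W : Set (ℕ → Bool)) : Set (List Bool → Bool) :=
  {s | ∃ x ∈ W, ConsistentII s x}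

theorem reachingStrategies_mono {V W : Set (ℕ → Bool)} (h : V ⊆ W) :
    reachingStrategies V ⊆ reachingStrategies W :=
  fun _ ⟨x, hx, hs⟩ => ⟨x, h hx, hs⟩

theorem reachingStrategies_iUnion {ι : Sort*} (t : ι → Set (ℕ → Bool)) :
    reachingStrategies (⋃ i, t i) = ⋃ i, reachingStrategies (t i) := by
  ext s
  simp only [reachingStrategies, mem_iUnion, mem_ofPred_eq]
  tauto

/-- The outer probability that a uniformly random strategy for Player II has a consistent play in
a given set. -/
noncomputable def reachingProbability : OuterMeasure (ℕ → Bool) where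
  measureOf W := coinMeasure (List Bool) (reachingStrategies W)
  empty := by simp [reachingStrategies]
  mono h := measure_mono (reachingStrategies_mono h)
  iUnion_nat t _ := by
    rw [reachingStrategies_iUnion]
    exact measure_iUnion_le _

theorem exists_strategyII_of_reachingProbability_lt_one {W : Set (ℕ → Bool)}
    (hW : reachingProbability W < 1) :
    ∃ sII : List Bool → Bool, ∀ x : ℕ → Bool, ConsistentII sII x → x ∉ W := by
  have hne : reachingStrategies W ≠ univ := fun h =>
    hW.ne ((congrArg (coinMeasure (List Bool)) h).trans measure_univ)
  obtain ⟨s, hs⟩ := (ne_univ_iff_exists_notMem _).1 hne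
  exact ⟨s, fun x hsx hxW => hs ⟨x, hxW, hsx⟩⟩

theorem reachingProbability_cylinder_le (x : ℕ → Bool) (n : ℕ) :
    reachingProbability (PiNat.cylinder x n) ≤ 2⁻¹ ^ (n / 2) := by
  classical
  let position : ℕ → List Bool := fun j => prefixList x (2 * j + 1)
  let F : Finset (List Bool) := (Finset.range (n / 2)).image position
  have hcard : F.card = n / 2 := by
    have hinj : Function.Injective position := fun i j hij => by
      have := prefixList_injective x hij
      omega
    rw [Finset.card_image_of_injective _ hinj, Finset.card_range]
  have hsub : reachingStrategies (PiNat.cylinder x n) ⊆ Set.pi F fun l => {x l.length} := by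
    rintro s ⟨y, hy, hs⟩ l hl
    obtain ⟨j, hj, rfl⟩ := Finset.mem_image.1 (Finset.mem_coe.1 hl)
    have hjn : 2 * j + 1 < n := by
      have := Finset.mem_range.1 hj
      omega
    calc s (prefixList x (2 * j + 1))
        = s (prefixList y (2 * j + 1)) := by rw [prefixList_eq_of_mem_cylinder hy hjn.le]
      _ = y (2 * j + 1) := (hs _ (odd_two_mul_add_one j)).symm
      _ = x (2 * j + 1) := hy _ hjn
      _ = x (prefixList x (2 * j + 1)).length := by rw [length_prefixList]
  calc coinMeasure (List Bool) (reachingStrategies (PiNat.cylinder x n))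
      ≤ coinMeasure (List Bool) (Set.pi F fun l => {x l.length}) := measure_mono hsub
    _ = 2⁻¹ ^ (n / 2) := by rw [coinMeasure_pi_singleton, hcard]

theorem reachingProbability_cylinder_sq_le (x : ℕ → Bool) (n : ℕ) :
    reachingProbability (PiNat.cylinder x n) ^ 2 ≤ 2 * 2⁻¹ ^ n :=
  calc reachingProbability (PiNat.cylinder x n) ^ 2
      ≤ (2⁻¹ ^ (n / 2)) ^ 2 := by gcongr; exact reachingProbability_cylinder_le x n
    _ = 2 * 2⁻¹ ^ (n / 2 * 2 + 1) := by
        rw [← pow_mul, pow_succ' _ (n / 2 * 2), ← mul_assoc,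
          ENNReal.mul_inv_cancel two_ne_zero ENNReal.ofNat_ne_top, one_mul]
    _ ≤ 2 * 2⁻¹ ^ n := by
        gcongr 2 * ?_
        exact pow_le_pow_right_of_le_one' (by simp) (by omega)

theorem reachingProbability_sq_le (t : Set (ℕ → Bool)) :
    reachingProbability t ^ 2 ≤ 2 * ediam t := by
  rcases t.eq_empty_or_nonempty with rfl | ⟨x, hx⟩
  · simp
  rw [mul_comm, ← ENNReal.div_le_iff two_ne_zero ENNReal.ofNat_ne_top]
  refine le_of_forall_gt fun r hr => ?_
  obtain ⟨n, htn, hnr⟩ := exists_subset_cylinder_of_ediam_lt hx hr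
  refine lt_of_le_of_lt (ENNReal.div_le_of_le_mul' ?_) hnr
  exact (pow_le_pow_left' (measure_mono htn) 2).trans (reachingProbability_cylinder_sq_le x n)

theorem reachingProbability_le_ediam_rpow (t : Set (ℕ → Bool)) :
    reachingProbability t ≤ 2 ^ (1 / 2 : ℝ) * ediam t ^ (1 / 2 : ℝ) := by
  rw [← ENNReal.mul_rpow_of_nonneg _ _ (by norm_num), one_div,
    ENNReal.le_rpow_inv_iff two_pos, ENNReal.rpow_two]
  exact reachingProbability_sq_le t

theorem reachingProbability_le_hausdorffMeasure (W : Set (ℕ → Bool)) :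
    reachingProbability W ≤ 2 ^ (1 / 2 : ℝ) * μH[1 / 2] W := by
  have hle : reachingProbability ≤ OuterMeasure.mkMetric
      ((2 ^ (1 / 2 : ℝ) : ℝ≥0∞) • fun r : ℝ≥0∞ => r ^ (1 / 2 : ℝ)) :=
    OuterMeasure.le_mkMetric _ _ 1 one_pos fun t _ => reachingProbability_le_ediam_rpow t
  rw [OuterMeasure.mkMetric_smul _ (by simp) (by simp)] at hle
  simpa [← OuterMeasure.coe_mkMetric, Measure.hausdorffMeasure] using hle W

end Reaching

-- The bound is sharp: the set `{x | ∀ n, Even n → x n = false}`, into which Player I can force the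
-- play, has `μH[1 / 2]`-measure exactly `2 ^ (-1 / 2)`.
theorem playerII_wins_of_dimH_lt_half_general (W : Set (ℕ → Bool))
    (hW : μH[1 / 2] W < 2 ^ (-1 / 2 : ℝ)) :
    ∃ sII : List Bool → Bool, ∀ x : ℕ → Bool, ConsistentII sII x → x ∉ W := by
  apply exists_strategyII_of_reachingProbability_lt_one
  calc reachingProbability W
      ≤ 2 ^ (1 / 2 : ℝ) * μH[1 / 2] W := reachingProbability_le_hausdorffMeasure W
    _ < 2 ^ (1 / 2 : ℝ) * 2 ^ (-1 / 2 : ℝ) := ENNReal.mul_lt_mul_right (by simp) (by simp) hW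
    _ = 1 := by
        rw [← ENNReal.rpow_add _ _ two_ne_zero ENNReal.ofNat_ne_top]
        norm_num

/-- If `dim_H W < 1/2` then Player II has a winning pure strategy in the binary
Gale–Stewart game with target set `W`; in particular the game is determined. -/
theorem playerII_wins_of_dimH_lt_half (W : Set (ℕ → Bool)) (hW : dimH W < 1 / 2) :
    (∃ sII : List Bool → Bool, ∀ x : ℕ → Bool, ConsistentII sII x → x ∉ W) ∧
    ((∃ sI : List Bool → Bool, ∀ x : ℕ → Bool, ConsistentI sI x → x ∈ W) ∨
      (∃ sII : List Bool → Bool, ∀ x : ℕ → Bool, ConsistentII sII x → x ∉ W)) := by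
  have hnull : μH[1 / 2] W = 0 := by
    simpa using hausdorffMeasure_of_dimH_lt (d := 1 / 2) (by simpa using hW)
  have hII := playerII_wins_of_dimH_lt_half_general W
    (hnull.trans_lt (ENNReal.rpow_pos two_pos ENNReal.ofNat_ne_top))
  exact ⟨hII, Or.inr hII⟩
end

section
/- Let T be a tree over an alphabet 𝒜, let ξ : 𝒫(⟦T⟧) → [0,∞] be monotone (C ⊆ Z implies ξ(C) ≤ ξ(Z)), and set t := inf of ξ(⟦s_I⟧) over all pure strategies s_I of Player I in T. If W ⊆ ⟦T⟧ satisfies ξ(W) < t, then Player I has no winning strategy in the game (T,W). Moreover, if in addition W is a Borel subset of ⟦T⟧, or ξ is Borel regular (meaning that for every C ⊆ ⟦T⟧ there exists a Borel set Z ⊆ ⟦T⟧ with C ⊆ Z and ξ(C) = ξ(Z)), then Player II has a winning strategy in (T,W). -/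
open Set Filter MeasureTheory
open scoped ENNReal

variable {A : Type*}

/-- A tree over the alphabet `A`: a nonempty, prefix-closed set of finite sequences in which
every position has a one-step extension. -/
def IsTree (T : Set (List A)) : Prop :=
  T.Nonempty ∧ (∀ p ∈ T, ∀ q : List A, q <+: p → q ∈ T) ∧ ∀ p ∈ T, ∃ a : A, p ++ [a] ∈ T

/-- The canopy `⟦T⟧`: the set of infinite plays all of whose finite prefixes lie in `T`. -/
def canopy (T : Set (List A)) : Set (ℕ → A) :=
  {x : ℕ → A | ∀ n : ℕ, (List.ofFn fun i : Fin n => x i) ∈ T}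

/-- `s` is a legal pure strategy of Player I in the tree `T` (Player I moves at positions of
even length). -/
def ValidI (T : Set (List A)) (s : List A → A) : Prop :=
  ∀ p ∈ T, Even p.length → p ++ [s p] ∈ T

/-- `s` is a legal pure strategy of Player II in the tree `T` (Player II moves at positions of
odd length). -/
def ValidII (T : Set (List A)) (s : List A → A) : Prop :=
  ∀ p ∈ T, Odd p.length → p ++ [s p] ∈ T

/-- `⟦s⟧` for a Player I strategy: the plays in `⟦T⟧` consistent with `s`. -/
def playsI (T : Set (List A)) (s : List A → A) : Set (ℕ → A) :=
  {x ∈ canopy T | ∀ n : ℕ, Even n → x n = s (List.ofFn fun i : Fin n => x i)}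

/-- `⟦s⟧` for a Player II strategy: the plays in `⟦T⟧` consistent with `s`. -/
def playsII (T : Set (List A)) (s : List A → A) : Set (ℕ → A) :=
  {x ∈ canopy T | ∀ n : ℕ, Odd n → x n = s (List.ofFn fun i : Fin n => x i)}

/-- `Z` is a Borel subset of the canopy `⟦T⟧`, for the subspace topology induced by the
product topology on `A^ℕ` with `A` discrete. -/
def BorelInCanopy [TopologicalSpace A] (T : Set (List A)) (Z : Set (ℕ → A)) : Prop :=
  @MeasurableSet (canopy T) (borel (canopy T)) (Subtype.val ⁻¹' Z)

/-!
If Player I had a winning strategy `s` for a set `Z ⊇ W` with `ξ Z = ξ W`, then `playsI T s ⊆ Z`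
would give `ξ (playsI T s) ≤ ξ W`, below the infimum. So Player I cannot win for `W`, and not for
a Borel hull `Z` of `W` either; by Borel determinacy Player II wins for the Borel set in question,
and a winning strategy against `Z ⊇ W` also wins against `W`.

Borel determinacy is proved by Martin's method of unravelling. A covering of a game is another game
with a map from its plays to plays of the original one, such that strategies can be pushed forward
and every play following the pushed strategy lifts to a play following the given one; so
determinacy passes from the cover to the covered game. Every Borel set becomes clopen in some cover,
where the Gale–Stewart theorem applies. For an open set, the cover asks Player I to commit himself
to a quasi-strategy `S` at some even length `K`, and Player II to answer either with a position
in `S` after which the play is bound to lie in the open set, and to which it must then lead, or with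
a quasi-strategy within `S` that avoids all such positions. For a countable union, the sets are
unravelled one after the other, in covers that are trivial on longer and longer positions; in the
inverse limit the union is open, and is unravelled once more.
-/

namespace BorelGame

universe u

/-- The two players. -/
inductive Player
  | I
  | II

namespace Player

/-- The player `i` is to move at positions of length `n`. -/
def Moves : Player → ℕ → Prop
  | I, n => Even n
  | II, n => Odd n

/-- The opponent of a player. -/
def other : Player → Player
  | I => II
  | II => I

theorem moves_other_iff {i : Player} {n : ℕ} : i.other.Moves n ↔ ¬ i.Moves n := by
  cases i
  · exact Nat.not_even_iff_odd.symm
  · exact Nat.not_odd_iff_even.symm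

end Player

/-! ### Arenas, plays and strategies -/

/-- The tree on which a game is played, level by level: `pos n` is the type of positions of
length `n`, each of which has a unique predecessor and at least one successor. -/
structure Arena where
  pos : ℕ → Type u
  parent : ∀ {n : ℕ}, pos (n + 1) → pos n
  exists_child : ∀ {n : ℕ} (p : pos n), ∃ q : pos (n + 1), parent q = p

namespace Arena

/-- An infinite branch of an arena. -/
@[ext]
structure Play (X : Arena.{u}) : Type u where
  seq : ∀ n, X.pos n
  parent_succ : ∀ n, X.parent (seq (n + 1)) = seq n

instance (X : Arena.{u}) : CoeFun X.Play fun _ => ∀ n, X.pos n := ⟨Play.seq⟩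

/-- A strategy prescribes a move at every position, so that it can be used by either player;
a player ignores the moves prescribed at the positions of the opponent. -/
@[ext]
structure Strategy (X : Arena.{u}) : Type u where
  move : ∀ n, X.pos n → X.pos (n + 1)
  parent_move : ∀ n p, X.parent (move n p) = p

instance (X : Arena.{u}) : CoeFun X.Strategy fun _ => ∀ n, X.pos n → X.pos (n + 1) :=
  ⟨Strategy.move⟩

/-- A set of positions, given level by level. -/
abbrev PosSet (X : Arena.{u}) : Type u := ∀ n, Set (X.pos n)

variable {X Y Z : Arena.{u}} {i : Player} {k l m n : ℕ}

/-- In the play `x`, the player `i` makes the moves of `σ` at the positions of length in `s`. -/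
def FollowsOn (i : Player) (σ : X.Strategy) (s : Set ℕ) (x : X.Play) : Prop :=
  ∀ n ∈ s, i.Moves n → x (n + 1) = σ n (x n)

/-- The play `x` is consistent with the strategy `σ` of the player `i`. -/
abbrev Follows (i : Player) (σ : X.Strategy) (x : X.Play) : Prop :=
  FollowsOn i σ univ x

theorem FollowsOn.mono {σ : X.Strategy} {s t : Set ℕ} {x : X.Play} (h : FollowsOn i σ t x)
    (hst : s ⊆ t) : FollowsOn i σ s x :=
  fun n hn => h n (hst hn)

theorem Play.eq_of_le {x y : X.Play} (hmn : m ≤ n) (h : x n = y n) : x m = y m := by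
  induction n, hmn using Nat.le_induction with
  | base => exact h
  | succ n _ ih => exact ih (by rw [← x.parent_succ, ← y.parent_succ, h])

instance : Nonempty X.Strategy := by
  choose f hf using fun n (p : X.pos n) => X.exists_child p
  exact ⟨⟨f, hf⟩⟩

theorem exists_move_eq (q : X.pos (n + 1)) : ∃ σ : X.Strategy, σ n (X.parent q) = q := by
  have hex : ∀ m (p : X.pos m), ∃ r, X.parent r = p ∧
      ∀ h : m = n, p = h ▸ X.parent q → r = h ▸ q := by
    intro m p
    by_cases h : ∃ h : m = n, p = h ▸ X.parent q
    · obtain ⟨rfl, rfl⟩ := h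
      exact ⟨q, rfl, fun _ _ => rfl⟩
    · obtain ⟨r, hr⟩ := X.exists_child p
      exact ⟨r, hr, fun h₁ h₂ => absurd ⟨h₁, h₂⟩ h⟩
  choose f hf hfq using hex
  exact ⟨⟨f, hf⟩, hfq n _ rfl rfl⟩

/-- The arena of the positions of positive length. -/
def shift (X : Arena.{u}) : Arena.{u} where
  pos n := X.pos (n + 1)
  parent := X.parent
  exists_child := X.exists_child

theorem exists_play_through : ∀ {X : Arena.{u}} (σ : X.Strategy) (p : X.pos n),
    ∃ x : X.Play, x n = p ∧ ∀ m ≥ n, x (m + 1) = σ m (x m) := by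
  induction n with
  | zero =>
    intro X σ p
    exact ⟨⟨fun n => Nat.rec p (fun m q => σ m q) n, fun n => σ.parent_move n _⟩, rfl,
      fun _ _ => rfl⟩
  | succ n ih =>
    intro X σ p
    obtain ⟨y, hyp, hyσ⟩ :=
      ih (X := X.shift) ⟨fun m => σ (m + 1), fun m => σ.parent_move (m + 1)⟩ p
    refine ⟨⟨fun | 0 => X.parent (y 0) | m + 1 => y m,
      fun | 0 => rfl | m + 1 => y.parent_succ m⟩, hyp, fun m hm => ?_⟩
    obtain ⟨m, rfl⟩ := Nat.exists_eq_succ_of_ne_zero (Nat.ne_zero_of_lt hm)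
    exact hyσ m (Nat.le_of_succ_le_succ hm)

/-- Some play through the position `p : X.pos n`. Only its values below `n`, which are the
predecessors of `p`, are independent of the choice. -/
noncomputable def playThrough (p : X.pos n) : X.Play :=
  (exists_play_through (Classical.arbitrary X.Strategy) p).choose

@[simp]
theorem playThrough_self (p : X.pos n) : playThrough p n = p :=
  (exists_play_through (Classical.arbitrary X.Strategy) p).choose_spec.1

theorem playThrough_of_le (x : X.Play) (h : m ≤ n) : playThrough (x n) m = x m :=
  Play.eq_of_le h (playThrough_self _)

/-- The play `x` enters the set `U` at length `m`, for the first time from length `l` on. -/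
structure FirstHit (U : X.PosSet) (l : ℕ) (x : X.Play) (m : ℕ) : Prop where
  le : l ≤ m
  mem : x m ∈ U m
  notMem : ∀ j ∈ Ico l m, x j ∉ U j

theorem exists_firstHit {U : X.PosSet} {x : X.Play} (hlm : l ≤ m) (hm : x m ∈ U m) :
    ∃ j, FirstHit U l x j := by
  classical
  have h : ∃ j, l ≤ j ∧ x j ∈ U j := ⟨m, hlm, hm⟩
  exact ⟨Nat.find h, (Nat.find_spec h).1, (Nat.find_spec h).2,
    fun j hj hjU => Nat.find_min h hj.2 ⟨hj.1, hjU⟩⟩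

theorem FirstHit.eq {U : X.PosSet} {x : X.Play} {m' : ℕ} (h : FirstHit U l x m)
    (h' : FirstHit U l x m') : m = m' :=
  le_antisymm (not_lt.1 fun hlt => h.notMem m' ⟨h'.le, hlt⟩ h'.mem)
    (not_lt.1 fun hlt => h'.notMem m ⟨h.le, hlt⟩ h.mem)

/-! ### Combining strategies -/

namespace Strategy

variable {σ τ : X.Strategy}

/-- Play `σ` at positions shorter than `l`, and then the strategy selected by `τ` according to
the position of length `l` that has been reached. -/
noncomputable def branch (σ : X.Strategy) (l : ℕ) (τ : X.pos l → X.Strategy) : X.Strategy where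
  move n p := if n < l then σ n p else τ (playThrough p l) n p
  parent_move n p := by split_ifs <;> exact parent_move _ n p

theorem branch_of_lt {τ : X.pos l → X.Strategy} (h : n < l) : σ.branch l τ n = σ n :=
  funext fun _ => if_pos h

theorem branch_of_le {τ : X.pos l → X.Strategy} (x : X.Play) (h : l ≤ n) :
    σ.branch l τ n (x n) = τ (x l) n (x n) := by
  rw [← playThrough_of_le x h]
  exact if_neg (not_lt.2 h)

theorem branch_congr {τ τ' : X.pos l → X.Strategy} {σ' : X.Strategy} (hσ : σ n = σ' n)
    (hτ : ∀ p, l ≤ n → τ p n = τ' p n) : σ.branch l τ n = σ'.branch l τ' n := by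
  funext p
  simp only [branch, hσ]
  split_ifs with h
  · rfl
  · rw [hτ _ (not_lt.1 h)]

open Classical in
/-- Play `σ` until, at a length `m ≥ l`, a position `q` of `Q` is reached, and `τ m q` from
then on. -/
noncomputable def switch (σ : X.Strategy) (l : ℕ) (Q : X.PosSet)
    (τ : ∀ m, X.pos m → X.Strategy) : X.Strategy where
  move n p := if h : ∃ m ≤ n, FirstHit Q l (playThrough p) m
    then τ h.choose (playThrough p h.choose) n p else σ n p
  parent_move n p := by split_ifs <;> exact parent_move _ n p

theorem switch_congr {Q : X.PosSet} {τ τ' : ∀ m, X.pos m → X.Strategy} {σ' : X.Strategy}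
    (hσ : σ n = σ' n) (hτ : ∀ m q, τ m q n = τ' m q n) :
    σ.switch l Q τ n = σ'.switch l Q τ' n := by
  funext p
  simp only [switch, hσ, hτ]

theorem switch_of_forall_notMem {Q : X.PosSet} {τ : ∀ m, X.pos m → X.Strategy} {x : X.Play}
    (h : ∀ j ∈ Icc l n, x j ∉ Q j) : σ.switch l Q τ n (x n) = σ n (x n) := by
  refine dif_neg fun ⟨m, hmn, hm⟩ => h m ⟨hm.le, hmn⟩ ?_
  rw [← playThrough_of_le x hmn]
  exact hm.mem

theorem switch_of_firstHit {Q : X.PosSet} {τ : ∀ m, X.pos m → X.Strategy} {x : X.Play}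
    (h : FirstHit Q l x m) (hmn : m ≤ n) : σ.switch l Q τ n (x n) = τ m (x m) n (x n) := by
  have h' : FirstHit Q l (playThrough (x n)) m := by
    refine ⟨h.le, ?_, fun j hj => ?_⟩
    · rw [playThrough_of_le x hmn]
      exact h.mem
    · rw [playThrough_of_le x (hj.2.le.trans hmn)]
      exact h.notMem j hj
  have hex : ∃ m ≤ n, FirstHit Q l (playThrough (x n)) m := ⟨m, hmn, h'⟩
  refine (dif_pos hex).trans ?_
  obtain rfl := hex.choose_spec.2.eq h'
  rw [playThrough_of_le x hex.choose_spec.1]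

end Strategy

section FollowsOn

variable {σ : X.Strategy} {s : Set ℕ} {x : X.Play} {Q : X.PosSet}

theorem FollowsOn.of_branch_lt {τ : X.pos l → X.Strategy} (h : FollowsOn i (σ.branch l τ) s x) :
    FollowsOn i σ (s ∩ Iio l) x := fun n hn hi => by
  rw [h n hn.1 hi, Strategy.branch_of_lt hn.2]

theorem FollowsOn.of_branch_le {τ : X.pos l → X.Strategy} (h : FollowsOn i (σ.branch l τ) s x) :
    FollowsOn i (τ (x l)) (s ∩ Ici l) x := fun n hn hi => by
  rw [h n hn.1 hi, Strategy.branch_of_le x hn.2]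

theorem FollowsOn.switch_cases {τ : ∀ m, X.pos m → X.Strategy}
    (h : FollowsOn i (σ.switch l Q τ) s x) :
    (∀ n ≥ l, x n ∉ Q n) ∧ FollowsOn i σ s x ∨
      ∃ m, FirstHit Q l x m ∧ FollowsOn i σ (s ∩ Iio m) x ∧
        FollowsOn i (τ m (x m)) (s ∩ Ici m) x := by
  by_cases hQ : ∃ m ≥ l, x m ∈ Q m
  · obtain ⟨m, hm⟩ : ∃ m, FirstHit Q l x m := hQ.elim fun m hm => exists_firstHit hm.1 hm.2
    refine Or.inr ⟨m, hm, fun n hn hi => ?_, fun n hn hi => ?_⟩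
    · rw [h n hn.1 hi, Strategy.switch_of_forall_notMem fun j hj =>
        hm.notMem j ⟨hj.1, hj.2.trans_lt hn.2⟩]
    · rw [h n hn.1 hi, Strategy.switch_of_firstHit hm hn.2]
  · push Not at hQ
    refine Or.inl ⟨hQ, fun n hn hi => ?_⟩
    rw [h n hn hi, Strategy.switch_of_forall_notMem fun j hj => hQ j hj.1]

end FollowsOn

/-! ### Forcing a play into a set of positions -/

/-- Every play from `p` in which the player `i` follows `σ` until `U` is entered does enter `U`,
and stays in `R` from the successor of `p` up to that moment. -/
def ForcesBy (i : Player) (R U : X.PosSet) (σ : X.Strategy) (p : X.pos n) : Prop :=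
  ∀ x : X.Play, x n = p → FollowsOn i σ {m | n ≤ m ∧ ∀ j ∈ Icc n m, x j ∉ U j} x →
    ∃ m, FirstHit U n x m ∧ ∀ j ∈ Ioc n m, x j ∈ R j

/-- The positions from which the player `i` can force the play to stay in `R` until it enters
`U`, and to enter it. -/
def Forces (i : Player) (R U : X.PosSet) : X.PosSet := fun _ => {p | ∃ σ, ForcesBy i R U σ p}

/-- A strategy witnessing membership in `Forces`; it is arbitrary at other positions. -/
noncomputable def forceStrategy (i : Player) (R U : X.PosSet) (p : X.pos n) : X.Strategy :=
  Classical.epsilon fun σ => ForcesBy i R U σ p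

/-- Membership in `S` is preserved from length `l` on by the opponent's moves which stay in `R`,
and can be preserved by the player `i`. For `R = ⊤` such an `S` is what is usually called a
quasi-strategy of the player `i`. -/
structure IsQuasiStrategy (i : Player) (l : ℕ) (R S : X.PosSet) : Prop where
  mem_of_opponent : ∀ n ≥ l, ¬ i.Moves n → ∀ q : X.pos (n + 1), X.parent q ∈ S n →
    q ∈ R (n + 1) → q ∈ S (n + 1)
  exists_move : ∀ n ≥ l, i.Moves n → ∀ p ∈ S n, ∃ q, X.parent q = p ∧ q ∈ S (n + 1)

section Forces

variable {R S U : X.PosSet}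

theorem forcesBy_forceStrategy {p : X.pos n} (hp : p ∈ Forces i R U n) :
    ForcesBy i R U (forceStrategy i R U p) p :=
  Classical.epsilon_spec hp

theorem mem_forces_of_mem {p : X.pos n} (hp : p ∈ U n) : p ∈ Forces i R U n := by
  refine ⟨Classical.arbitrary _, fun x hx _ => ⟨n, ⟨le_rfl, hx ▸ hp, fun j hj => ?_⟩,
    fun j hj => ?_⟩⟩
  · exact absurd hj.2 (not_lt.2 hj.1)
  · exact absurd hj.1 (not_lt.2 hj.2)

theorem mem_forces_of_move {p : X.pos n} (σ : X.Strategy)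
    (h : ∀ q, X.parent q = p → (i.Moves n → q = σ n p) →
      q ∈ R (n + 1) ∧ q ∈ Forces i R U (n + 1)) : p ∈ Forces i R U n := by
  by_cases hpU : p ∈ U n
  · exact mem_forces_of_mem hpU
  refine ⟨σ.branch (n + 1) fun q => forceStrategy i R U q, fun x hx hfol => ?_⟩
  have hxU : x n ∉ U n := hx ▸ hpU
  obtain ⟨hR, hF⟩ := h (x (n + 1)) (by rw [x.parent_succ, hx]) fun hi => by
    rw [hfol.of_branch_lt n ⟨⟨le_rfl, fun j hj => ?_⟩, Nat.lt_succ_self n⟩ hi, hx]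
    rwa [le_antisymm hj.2 hj.1]
  have hU : ∀ {k}, (∀ j ∈ Ico (n + 1) k, x j ∉ U j) → ∀ j ∈ Ico n k, x j ∉ U j := by
    intro k hk j hj
    rcases hj.1.eq_or_lt with rfl | hlt
    · exact hxU
    · exact hk j ⟨hlt, hj.2⟩
  obtain ⟨m, hm, hmR⟩ := forcesBy_forceStrategy hF x rfl <|
    hfol.of_branch_le.mono fun m hm => ⟨⟨n.le_succ.trans hm.1, fun j hj =>
      hU (k := m + 1) (fun j hj => hm.2 j ⟨hj.1, Nat.le_of_lt_succ hj.2⟩) j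
        ⟨hj.1, Nat.lt_succ_of_le hj.2⟩⟩, hm.1⟩
  refine ⟨m, ⟨n.le_succ.trans hm.le, hm.mem, hU hm.notMem⟩, fun j hj => ?_⟩
  rcases (Nat.succ_le_of_lt hj.1).eq_or_lt with rfl | hlt
  · exact hR
  · exact hmR j ⟨hlt, hj.2⟩

theorem isQuasiStrategy_top : IsQuasiStrategy i l (⊤ : X.PosSet) ⊤ :=
  ⟨fun _ _ _ _ _ _ => trivial,
    fun _ _ _ p _ => (X.exists_child p).imp fun _ h => ⟨h, trivial⟩⟩

theorem IsQuasiStrategy.mono (hS : IsQuasiStrategy i l R S) (hlm : l ≤ m) :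
    IsQuasiStrategy i m R S :=
  ⟨fun n hn => hS.mem_of_opponent n (hlm.trans hn), fun n hn => hS.exists_move n (hlm.trans hn)⟩

theorem IsQuasiStrategy.diff_forces (hS : IsQuasiStrategy i l ⊤ S) (U : X.PosSet) :
    IsQuasiStrategy i.other l S (S \ Forces i S U) := by
  refine ⟨fun n _ hi q hq hqS => ⟨hqS, fun hqF => hq.2 ?_⟩, fun n hn hi p hp => ?_⟩
  · obtain ⟨σ, hσ⟩ := exists_move_eq q
    refine mem_forces_of_move σ fun r _ hr => ?_
    obtain rfl : r = q := (hr (not_not.1 (Player.moves_other_iff.not.1 hi))).trans hσ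
    exact ⟨hqS, hqF⟩
  · have hi' := Player.moves_other_iff.1 hi
    by_contra! h
    refine hp.2 (mem_forces_of_move (Classical.arbitrary _) fun q hq _ => ?_)
    have hqS : q ∈ S (n + 1) := hS.mem_of_opponent n hn hi' q (hq ▸ hp.1) trivial
    exact ⟨hqS, by_contra fun hqF => h q hq ⟨hqS, hqF⟩⟩

theorem IsQuasiStrategy.exists_strategy (hS : IsQuasiStrategy i l ⊤ S) :
    ∃ σ : X.Strategy, ∀ x : X.Play, x l ∈ S l → FollowsOn i σ (Ici l) x → ∀ n ≥ l, x n ∈ S n := by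
  have hex : ∀ n (p : X.pos n), ∃ q, X.parent q = p ∧
      (l ≤ n → i.Moves n → p ∈ S n → q ∈ S (n + 1)) := by
    intro n p
    by_cases h : l ≤ n ∧ i.Moves n ∧ p ∈ S n
    · obtain ⟨q, hqp, hq⟩ := hS.exists_move n h.1 h.2.1 p h.2.2
      exact ⟨q, hqp, fun _ _ _ => hq⟩
    · obtain ⟨q, hq⟩ := X.exists_child p
      exact ⟨q, hq, fun h₁ h₂ h₃ => absurd ⟨h₁, h₂, h₃⟩ h⟩
  choose f hf hfS using hex
  refine ⟨⟨f, hf⟩, fun x hx hfol n hn => ?_⟩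
  induction n, hn using Nat.le_induction with
  | base => exact hx
  | succ n hn ih =>
    by_cases hi : i.Moves n
    · rw [hfol n hn hi]
      exact hfS n _ hn hi ih
    · exact hS.mem_of_opponent n hn hi _ (by rwa [x.parent_succ]) trivial

/-- From length `l` on, play `σ` until a position is reached from which `U` can be forced, then
force `U`, and continue with `τ m q` after entering `U` at `q : X.pos m`. -/
noncomputable def pursue (i : Player) (R U : X.PosSet) (l : ℕ) (σ : X.Strategy)
    (τ : ∀ m, X.pos m → X.Strategy) : X.Strategy :=
  σ.switch l (Forces i R U) fun m q => (forceStrategy i R U q).switch m U τ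

theorem pursue_congr {σ σ' : X.Strategy} {τ τ' : ∀ m, X.pos m → X.Strategy} (hσ : σ n = σ' n)
    (hτ : ∀ m q, τ m q n = τ' m q n) : pursue i R U l σ τ n = pursue i R U l σ' τ' n :=
  Strategy.switch_congr hσ fun _ _ => Strategy.switch_congr rfl hτ

theorem FollowsOn.pursue_cases {σ : X.Strategy} {τ : ∀ m, X.pos m → X.Strategy} {x : X.Play}
    (h : FollowsOn i (pursue i R U l σ τ) (Ici l) x) :
    (∀ n ≥ l, x n ∉ Forces i R U n) ∧ FollowsOn i σ (Ici l) x ∨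
      ∃ a b, FirstHit (Forces i R U) l x a ∧ FirstHit U a x b ∧ FollowsOn i σ (Ico l a) x ∧
        (∀ j ∈ Ioc a b, x j ∈ R j) ∧ FollowsOn i (τ b (x b)) (Ici b) x := by
  rcases h.switch_cases with h | ⟨a, ha, hσ, hforce⟩
  · exact Or.inl h
  rw [Ici_inter_Ici, max_eq_right ha.le] at hforce
  rcases hforce.switch_cases with ⟨hU, hforce⟩ | ⟨b, hb, hforce, hτ⟩
  · obtain ⟨b, hb, -⟩ := forcesBy_forceStrategy ha.mem x rfl (hforce.mono fun m hm => hm.1)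
    exact absurd hb.mem (hU b hb.le)
  · obtain ⟨b', hb', hR⟩ := forcesBy_forceStrategy ha.mem x rfl <| hforce.mono fun m hm =>
      ⟨hm.1, not_le.1 fun hbm => hm.2 b ⟨hb.le, hbm⟩ hb.mem⟩
    obtain rfl := hb.eq hb'
    rw [Ici_inter_Ici, max_eq_right hb.le] at hτ
    exact Or.inr ⟨a, b, ha, hb, hσ, hR, hτ⟩

end Forces

/-! ### Open games -/

/-- A set of plays is open if membership in it is decided at a finite stage of the play. -/
instance : TopologicalSpace X.Play where
  IsOpen B := ∀ x ∈ B, ∃ n, ∀ y : X.Play, y n = x n → y ∈ B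
  isOpen_univ _ _ := ⟨0, fun _ _ => trivial⟩
  isOpen_inter B C hB hC x hx := by
    obtain ⟨m, hm⟩ := hB x hx.1
    obtain ⟨n, hn⟩ := hC x hx.2
    exact ⟨max m n, fun y hy => ⟨hm y (Play.eq_of_le (le_max_left m n) hy),
      hn y (Play.eq_of_le (le_max_right m n) hy)⟩⟩
  isOpen_sUnion 𝓑 h x := fun ⟨B, hB, hx⟩ =>
    (h B hB x hx).imp fun _ hn y hy => ⟨B, hB, hn y hy⟩

theorem isOpen_iff {B : Set X.Play} :
    IsOpen B ↔ ∀ x ∈ B, ∃ n, ∀ y : X.Play, y n = x n → y ∈ B :=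
  Iff.rfl

/-- The positions all of whose plays lie in `B`. -/
def decided (B : Set X.Play) : X.PosSet := fun n => {p | ∀ x : X.Play, x n = p → x ∈ B}

theorem mem_of_mem_decided {B : Set X.Play} {x : X.Play} (h : x n ∈ decided B n) : x ∈ B :=
  h x rfl

theorem mem_decided_of_le {B : Set X.Play} {x : X.Play} (hmn : m ≤ n) (h : x m ∈ decided B m) :
    x n ∈ decided B n :=
  fun y hy => h y (Play.eq_of_le hmn hy)

theorem exists_mem_decided {B : Set X.Play} (hB : IsOpen B) {x : X.Play} (hx : x ∈ B) :
    ∃ n, x n ∈ decided B n :=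
  isOpen_iff.1 hB x hx

/-- One of the players has a winning strategy in the game that Player I wins if the play lies
in `B`. -/
def Determined (B : Set X.Play) : Prop :=
  (∃ σ : X.Strategy, ∀ x, Follows .I σ x → x ∈ B) ∨
    ∃ σ : X.Strategy, ∀ x, Follows .II σ x → x ∉ B

/-- The **Gale–Stewart theorem**. -/
theorem determined_of_isOpen [Subsingleton (X.pos 0)] {B : Set X.Play} (hB : IsOpen B) :
    Determined B := by
  by_cases h : ∃ p, p ∈ Forces .I ⊤ (decided B) 0
  · obtain ⟨p, σ, hσ⟩ := h
    refine Or.inl ⟨σ, fun x hx => ?_⟩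
    obtain ⟨m, hm, -⟩ := hσ x (Subsingleton.elim _ _) (hx.mono (subset_univ _))
    exact mem_of_mem_decided hm.mem
  · obtain ⟨σ, hσ⟩ : ∃ σ : X.Strategy, ∀ x : X.Play,
        x 0 ∈ ((⊤ : X.PosSet) \ Forces .I ⊤ (decided B)) 0 → FollowsOn .II σ (Ici 0) x →
          ∀ n ≥ 0, x n ∈ ((⊤ : X.PosSet) \ Forces .I ⊤ (decided B)) n :=
      (isQuasiStrategy_top.diff_forces (decided B)).exists_strategy
    refine Or.inr ⟨σ, fun x hx hxB => ?_⟩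
    obtain ⟨n, hn⟩ := exists_mem_decided hB hxB
    exact (hσ x ⟨trivial, not_exists.1 h _⟩ (hx.mono (subset_univ _)) n n.zero_le).2
      (mem_forces_of_mem hn)

/-! ### Coverings -/

/-- A length-preserving map of positions commuting with taking predecessors. -/
structure Hom (Y X : Arena.{u}) where
  map : ∀ {n : ℕ}, Y.pos n → X.pos n
  parent_map : ∀ {n : ℕ} (p : Y.pos (n + 1)), X.parent (map p) = map (Y.parent p)

namespace Hom

/-- The identity of an arena. -/
protected def id (X : Arena.{u}) : Hom X X := ⟨fun p => p, fun _ => rfl⟩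

/-- The composite of two maps of arenas. -/
def comp (f : Hom Y X) (g : Hom Z Y) : Hom Z X :=
  ⟨fun p => f.map (g.map p), fun p => by rw [f.parent_map, g.parent_map]⟩

/-- The map on plays induced by a map of arenas. -/
def play (f : Hom Y X) (y : Y.Play) : X.Play :=
  ⟨fun n => f.map (y n), fun n => by rw [f.parent_map, y.parent_succ]⟩

theorem continuous_play (f : Hom Y X) : Continuous f.play := by
  refine ⟨fun B hB y hy => ?_⟩
  obtain ⟨n, hn⟩ := isOpen_iff.1 hB _ hy
  exact ⟨n, fun z hz => hn (f.play z) (congrArg f.map hz)⟩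

end Hom

/-- Martin's `k`-coverings of `X` by `Y`: a map from `Y` to `X`, bijective on positions of length
at most `k`, together with a map `push` on the strategies of each player, such that a play
following `push i σ` lifts to a play following `σ`. The restriction of `push i σ` to positions
shorter than `N` only depends on that of `σ`. -/
structure Covering (k : ℕ) (Y X : Arena.{u}) extends Hom Y X where
  push : Player → Y.Strategy → X.Strategy
  push_local : ∀ (i : Player) {σ τ : Y.Strategy} {N : ℕ}, (∀ n < N, σ n = τ n) →
    ∀ n < N, push i σ n = push i τ n
  exists_lift : ∀ {i : Player} {σ : Y.Strategy} {x : X.Play}, Follows i (push i σ) x →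
    ∃ y : Y.Play, Follows i σ y ∧ toHom.play y = x
  bijective : ∀ n ≤ k, Function.Bijective (map (n := n))
  push_map : ∀ (i : Player) (σ : Y.Strategy), ∀ n < k, ∀ p : Y.pos n,
    push i σ n (map p) = map (σ n p)

namespace Covering

/-- The composite of two coverings. -/
def comp (c : Covering k Y X) (d : Covering k Z Y) : Covering k Z X where
  toHom := c.toHom.comp d.toHom
  push i σ := c.push i (d.push i σ)
  push_local i _ _ _ h := c.push_local i (d.push_local i h)
  exists_lift hx := by
    obtain ⟨y, hy, rfl⟩ := c.exists_lift hx
    obtain ⟨z, hz, rfl⟩ := d.exists_lift hy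
    exact ⟨z, hz, rfl⟩
  bijective n hn := (c.bijective n hn).comp (d.bijective n hn)
  push_map i σ n hn p :=
    (c.push_map i _ n hn (d.map p)).trans (congrArg c.map (d.push_map i σ n hn p))

/-- A `k`-covering is an `l`-covering for all `l ≤ k`. -/
def mono (c : Covering k Y X) (h : l ≤ k) : Covering l Y X where
  toHom := c.toHom
  push := c.push
  push_local := c.push_local
  exists_lift := c.exists_lift
  bijective n hn := c.bijective n (hn.trans h)
  push_map i σ n hn := c.push_map i σ n (hn.trans_le h)

theorem determined (c : Covering k Y X) {B : Set X.Play} (h : Determined (c.play ⁻¹' B)) :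
    Determined B := by
  refine h.imp (fun ⟨σ, hσ⟩ => ⟨c.push .I σ, fun x hx => ?_⟩)
    (fun ⟨σ, hσ⟩ => ⟨c.push .II σ, fun x hx => ?_⟩)
  all_goals
    obtain ⟨y, hy, rfl⟩ := c.exists_lift hx
    exact hσ y hy

end Covering

/-! ### Inverse limits of coverings -/

theorem exists_thread {J : ℕ} {P : ℕ → Type u} (f : ∀ j, P (j + 1) → P j)
    (hf : ∀ j ≥ J, Function.Surjective (f j)) (p : P J) :
    ∃ q : ∀ j, P j, (∀ j, f j (q (j + 1)) = q j) ∧ q J = p := by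
  induction J generalizing P with
  | zero =>
    choose g hg using fun j => hf j (Nat.zero_le j)
    exact ⟨fun j => Nat.rec p (fun j r => g j r) j, fun j => hg j _, rfl⟩
  | succ J ih =>
    obtain ⟨q, hq, hqJ⟩ := ih (P := fun j => P (j + 1)) (fun j => f (j + 1))
      (fun j hj => hf (j + 1) (Nat.succ_le_succ hj)) p
    exact ⟨fun | 0 => f 0 (q 0) | j + 1 => q j, fun | 0 => rfl | j + 1 => hq j, hqJ⟩

theorem thread_ext {J : ℕ} {P : ℕ → Type u} {f : ∀ j, P (j + 1) → P j}
    (hf : ∀ j ≥ J, Function.Injective (f j)) {p q : ∀ j, P j}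
    (hp : ∀ j, f j (p (j + 1)) = p j) (hq : ∀ j, f j (q (j + 1)) = q j) (h : p J = q J) :
    p = q := by
  have above : ∀ j ≥ J, p j = q j := fun j hj => by
    induction j, hj using Nat.le_induction with
    | base => exact h
    | succ j hj ih => exact hf j hj (by rw [hp, hq, ih])
  have below : ∀ j ≤ J, p j = q j := fun j hj => by
    induction hj using Nat.decreasingInduction with
    | self => exact h
    | of_succ j _ ih => rw [← hp, ← hq, ih]
  exact funext fun j => (le_total J j).elim (above j) (below j)

section Limit

variable {V : ℕ → Arena.{u}} (c : ∀ j, Covering (k + j) (V (j + 1)) (V j))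

/-- The inverse limit of a sequence of coverings. -/
def limit : Arena.{u} where
  pos n := {p : ∀ j, (V j).pos n // ∀ j, (c j).map (p (j + 1)) = p j}
  parent p := ⟨fun j => (V j).parent (p.1 j), fun j => by rw [← (c j).parent_map, p.2]⟩
  exists_child {n} p := by
    obtain ⟨r, hr⟩ := (V (n + 1)).exists_child (p.1 (n + 1))
    obtain ⟨q, hq, hqr⟩ := exists_thread (P := fun j => (V j).pos (n + 1)) (fun j => (c j).map)
      (fun j hj => ((c j).bijective (n + 1) (by omega)).2) r
    refine ⟨⟨q, hq⟩, Subtype.ext ?_⟩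
    refine thread_ext (J := n + 1) (fun j hj => ((c j).bijective n (by omega)).1)
      (fun j => ?_) p.2 ?_
    · rw [← (c j).parent_map, hq]
    · exact (congrArg (V (n + 1)).parent hqr).trans hr

/-- The projections of the inverse limit. -/
def limitProj (j : ℕ) : Hom (limit c) (V j) where
  map p := p.1 j
  parent_map _ := rfl

theorem map_limitProj_succ (j : ℕ) (p : (limit c).pos n) :
    (c j).map ((limitProj c (j + 1)).map p) = (limitProj c j).map p :=
  p.2 j

theorem bijective_limitProj {J : ℕ} (hn : n ≤ k + J) :
    Function.Bijective ((limitProj c J).map (n := n)) := by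
  have hbij : ∀ j ≥ J, Function.Bijective ((c j).map (n := n)) :=
    fun j hj => (c j).bijective n (by omega)
  refine ⟨fun p q h => Subtype.ext (thread_ext (fun j hj => (hbij j hj).1) p.2 q.2 h),
    fun r => ?_⟩
  obtain ⟨q, hq, hqr⟩ := exists_thread (P := fun j => (V j).pos n) (fun j => (c j).map)
    (fun j hj => (hbij j hj).2) r
  exact ⟨⟨q, hq⟩, hqr⟩

/-- The strategy on the `j`-th term pushed forward from a strategy on the `J`-th term. -/
def pushDown (i : Player) {j J : ℕ} (τ : (V J).Strategy) (h : j ≤ J) : (V j).Strategy :=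
  Nat.decreasingInduction (motive := fun j _ => (V j).Strategy) (fun j _ τ => (c j).push i τ) τ h

theorem pushDown_self (i : Player) {J : ℕ} (τ : (V J).Strategy) : pushDown c i τ le_rfl = τ :=
  Nat.decreasingInduction_self _ _

theorem pushDown_of_lt (i : Player) {j J : ℕ} (τ : (V J).Strategy) (h : j < J) :
    pushDown c i τ h.le = (c j).push i (pushDown c i τ h) :=
  Nat.decreasingInduction_succ_left _ _ _ _

theorem pushDown_succ (i : Player) {j J : ℕ} (τ : (V (J + 1)).Strategy) (h : j ≤ J) :
    pushDown c i τ (Nat.le_succ_of_le h) = pushDown c i ((c J).push i τ) h :=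
  Nat.decreasingInduction_succ _ _ _ _

theorem pushDown_local (i : Player) {j J N : ℕ} {σ τ : (V J).Strategy} (h : j ≤ J)
    (hστ : ∀ n < N, σ n = τ n) : ∀ n < N, pushDown c i σ h n = pushDown c i τ h n := by
  induction h using Nat.decreasingInduction with
  | self => simpa only [pushDown_self] using hστ
  | of_succ j h ih =>
    rw [pushDown_of_lt c i σ h, pushDown_of_lt c i τ h]
    exact (c j).push_local i ih

theorem exists_limitApprox (ρ : (limit c).Strategy) (J : ℕ) : ∃ τ : (V J).Strategy,
    ∀ n < k + J, ∀ p, τ n ((limitProj c J).map p) = (limitProj c J).map (ρ n p) := by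
  obtain ⟨τ₀⟩ : Nonempty (V J).Strategy := inferInstance
  have hex : ∀ n (r : (V J).pos n), ∃ q, (V J).parent q = r ∧
      (n < k + J → ∀ p, (limitProj c J).map p = r → q = (limitProj c J).map (ρ n p)) := by
    intro n r
    by_cases hn : n < k + J
    · obtain ⟨p, rfl⟩ := (bijective_limitProj c hn.le).2 r
      refine ⟨(limitProj c J).map (ρ n p), ?_, fun _ p' hp' => ?_⟩
      · rw [Hom.parent_map, ρ.parent_move]
      · rw [(bijective_limitProj c hn.le).1 hp']
    · exact ⟨τ₀ n r, τ₀.parent_move n r, fun h => absurd h hn⟩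
  choose f hf hfρ using hex
  exact ⟨⟨f, hf⟩, fun n hn p => hfρ n _ hn p rfl⟩

/-- A strategy on the `J`-th term which agrees with `ρ` at positions shorter than `k + J`. -/
noncomputable def limitApprox (ρ : (limit c).Strategy) (J : ℕ) : (V J).Strategy :=
  (exists_limitApprox c ρ J).choose

theorem limitApprox_limitProj (ρ : (limit c).Strategy) {J : ℕ} (hn : n < k + J)
    (p : (limit c).pos n) :
    limitApprox c ρ J n ((limitProj c J).map p) = (limitProj c J).map (ρ n p) :=
  (exists_limitApprox c ρ J).choose_spec n hn p

theorem limitApprox_congr {ρ ρ' : (limit c).Strategy} {J : ℕ} (hn : n < k + J)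
    (h : ρ n = ρ' n) : limitApprox c ρ J n = limitApprox c ρ' J n := by
  funext r
  obtain ⟨p, rfl⟩ := (bijective_limitProj c hn.le).2 r
  exact (limitApprox_limitProj c ρ hn p).trans <|
    (congrArg (fun f => (limitProj c J).map (f p)) h).trans (limitApprox_limitProj c ρ' hn p).symm

theorem push_limitApprox_succ (i : Player) (ρ : (limit c).Strategy) (J : ℕ) (hn : n < k + J) :
    (c J).push i (limitApprox c ρ (J + 1)) n = limitApprox c ρ J n := by
  funext r
  obtain ⟨p, rfl⟩ := (bijective_limitProj c hn.le).2 r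
  calc (c J).push i (limitApprox c ρ (J + 1)) n ((limitProj c J).map p)
    _ = (c J).map (limitApprox c ρ (J + 1) n ((limitProj c (J + 1)).map p)) := by
      rw [← map_limitProj_succ, (c J).push_map i _ n hn]
    _ = (limitProj c J).map (ρ n p) := by
      rw [limitApprox_limitProj c ρ (by omega), map_limitProj_succ]
    _ = limitApprox c ρ J n ((limitProj c J).map p) := (limitApprox_limitProj c ρ hn p).symm

theorem pushDown_limitApprox_of_le (i : Player) (ρ : (limit c).Strategy) {j J J' : ℕ}
    (hj : j ≤ J) (hJ : J ≤ J') (hn : n < k + J) :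
    pushDown c i (limitApprox c ρ J') (hj.trans hJ) n = pushDown c i (limitApprox c ρ J) hj n := by
  induction J', hJ using Nat.le_induction with
  | base => rfl
  | succ J' hJ ih =>
    rw [← ih, pushDown_succ c i _ (hj.trans hJ)]
    exact pushDown_local c i _ (fun m hm => push_limitApprox_succ c i ρ J' hm) n (by omega)

/-- The strategy on the `j`-th term induced by a strategy on the inverse limit. -/
noncomputable def limitPush (i : Player) (ρ : (limit c).Strategy) (j : ℕ) : (V j).Strategy where
  move n := pushDown c i (limitApprox c ρ (j + (n + 1))) (j.le_add_right (n + 1)) n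
  parent_move _ _ := Strategy.parent_move _ _ _

theorem limitPush_eq (i : Player) (ρ : (limit c).Strategy) {j J : ℕ} (hj : j ≤ J)
    (hn : n < k + J) : limitPush c i ρ j n = pushDown c i (limitApprox c ρ J) hj n := by
  have hstable : limitPush c i ρ j n = pushDown c i
      (limitApprox c ρ (max (j + (n + 1)) J)) (hj.trans (le_max_right _ _)) n :=
    (pushDown_limitApprox_of_le c i ρ _ (le_max_left _ _) (by omega)).symm
  rw [hstable, pushDown_limitApprox_of_le c i ρ hj (le_max_right _ _) hn]

theorem push_limitPush_succ (i : Player) (ρ : (limit c).Strategy) (j : ℕ) :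
    (c j).push i (limitPush c i ρ (j + 1)) = limitPush c i ρ j := by
  ext n p
  have hlt : j < j + (n + 1) := by omega
  rw [limitPush_eq c i ρ hlt.le (by omega), pushDown_of_lt c i _ hlt]
  exact congrFun ((c j).push_local i (N := n + 1)
    (fun m hm => limitPush_eq c i ρ hlt (by omega)) n (by omega)) p

theorem limitPush_limitProj (i : Player) (ρ : (limit c).Strategy) {j : ℕ} (hn : n < k + j)
    (p : (limit c).pos n) :
    limitPush c i ρ j n ((limitProj c j).map p) = (limitProj c j).map (ρ n p) := by
  rw [limitPush_eq c i ρ le_rfl hn, pushDown_self, limitApprox_limitProj c ρ hn]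

theorem limitPush_local (i : Player) {ρ ρ' : (limit c).Strategy} {N : ℕ}
    (h : ∀ n < N, ρ n = ρ' n) (j : ℕ) :
    ∀ n < N, limitPush c i ρ j n = limitPush c i ρ' j n := by
  intro n hn
  have hj : j ≤ j + N := j.le_add_right N
  rw [limitPush_eq c i ρ hj (by omega), limitPush_eq c i ρ' hj (by omega)]
  exact pushDown_local c i hj (fun m hm => limitApprox_congr c (by omega) (h m hm)) n hn

theorem exists_lift_limitPush {i : Player} {ρ : (limit c).Strategy} {x : (V 0).Play}
    (hx : Follows i (limitPush c i ρ 0) x) :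
    ∃ y : (limit c).Play, Follows i ρ y ∧ (limitProj c 0).play y = x := by
  have hstep : ∀ j (y : {y : (V j).Play // Follows i (limitPush c i ρ j) y}),
      ∃ z : {z : (V (j + 1)).Play // Follows i (limitPush c i ρ (j + 1)) z},
        (c j).play z.1 = y.1 := by
    rintro j ⟨y, hy⟩
    rw [← push_limitPush_succ] at hy
    obtain ⟨z, hz, hzy⟩ := (c j).exists_lift hy
    exact ⟨⟨z, hz⟩, hzy⟩
  choose g hg using hstep
  let y : ∀ j, {y : (V j).Play // Follows i (limitPush c i ρ j) y} :=
    fun j => Nat.rec ⟨x, hx⟩ (fun j r => g j r) j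
  have hthread : ∀ j n, (c j).map ((y (j + 1)).1 n) = (y j).1 n := fun j n =>
    congrArg (fun z : (V j).Play => z n) (hg j (y j))
  refine ⟨⟨fun n => ⟨fun j => (y j).1 n, fun j => hthread j n⟩,
    fun n => Subtype.ext (funext fun j => (y j).1.parent_succ n)⟩, fun n _ hi => ?_, rfl⟩
  apply (bijective_limitProj c (n := n + 1) (J := n + 1) (by omega)).1
  rw [← limitPush_limitProj c i ρ (by omega)]
  exact (y (n + 1)).2 n trivial hi

/-- The inverse limit covers the first term of the sequence. -/
noncomputable def limitCovering : Covering k (limit c) (V 0) where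
  toHom := limitProj c 0
  push i ρ := limitPush c i ρ 0
  push_local i _ _ _ h := limitPush_local c i h 0
  exists_lift := exists_lift_limitPush c
  bijective _ hn := bijective_limitProj c hn
  push_map i ρ _ hn := limitPush_limitProj c i ρ hn

theorem isOpen_preimage_iUnion_limit {f : ∀ j, Hom (V j) X}
    (hf : ∀ j, f (j + 1) = (f j).comp (c j).toHom) {B : ℕ → Set X.Play}
    (hB : ∀ j, IsOpen ((f (j + 1)).play ⁻¹' B j)) :
    IsOpen (((f 0).comp (limitProj c 0)).play ⁻¹' ⋃ j, B j) := by
  have hplay : ∀ j z,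
      ((f 0).comp (limitProj c 0)).play z = (f j).play ((limitProj c j).play z) := by
    intro j z
    induction j with
    | zero => rfl
    | succ j ih =>
      rw [ih, hf]
      exact Play.ext (funext fun n => congrArg (f j).map (map_limitProj_succ c j (z n)).symm)
  rw [preimage_iUnion]
  refine isOpen_iUnion fun j => ?_
  have hpre : ((f 0).comp (limitProj c 0)).play ⁻¹' B j =
      (limitProj c (j + 1)).play ⁻¹' ((f (j + 1)).play ⁻¹' B j) :=
    ext fun z => iff_of_eq (congrArg (· ∈ B j) (hplay (j + 1) z))
  rw [hpre]
  exact (hB j).preimage (limitProj c (j + 1)).continuous_play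

end Limit

/-- For every `k`, the preimage of `B` under any map of arenas becomes clopen in some `k`-covering.
Allowing for a preliminary map makes the unravelling of countably many sets one after the other
possible. -/
def Unravels (B : Set X.Play) : Prop :=
  ∀ (Y : Arena.{u}) (f : Hom Y X) (k : ℕ), ∃ (Z : Arena.{u}) (c : Covering k Z Y),
    IsClopen ((f.comp c.toHom).play ⁻¹' B)

theorem Unravels.compl {B : Set X.Play} (h : Unravels B) : Unravels Bᶜ := by
  intro Y f k
  obtain ⟨Z, c, hc⟩ := h Y f k
  exact ⟨Z, c, hc.compl⟩

theorem Unravels.determined [Subsingleton (X.pos 0)] {B : Set X.Play} (h : Unravels B) :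
    Determined B := by
  obtain ⟨Z, c, hc⟩ := h X (Hom.id X) 0
  have : Subsingleton (Z.pos 0) := (c.bijective 0 le_rfl).1.subsingleton
  exact c.determined (determined_of_isOpen hc.isOpen)

/-! ### Unravelling an open set -/

/-- The second auxiliary move of the unravelling game, made by Player II: either the rest of the
play has to follow `v` up to length `m`, or it has to stay in `S`. -/
inductive Reply (X : Arena.{u}) : Type u
  | reach (m : ℕ) (v : X.Play)
  | avoid (S : X.PosSet)

/-- The positions which a reply leaves open. -/
def Reply.Permits : X.Reply → X.PosSet
  | reach m v => fun n => {p | n ≤ m → p = v n}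
  | avoid S => S

/-- The positions of `D` of length at least `K + 2`. -/
def late (K : ℕ) (D : X.PosSet) : X.PosSet := fun n => {p | K + 2 ≤ n ∧ p ∈ D n}

/-- The replies available to Player II once Player I has confined himself to `S`: to name a play
that stays in `S` until it enters `D`, or to confine the play to a quasi-strategy that avoids
`D`. -/
def Reply.Allowed (K : ℕ) (D S : X.PosSet) : X.Reply → Prop
  | reach m v => v m ∈ late K D m ∧ ∀ j ∈ Icc (K + 1) m, v j ∈ S j
  | avoid S' => (∀ n ≥ K + 2, S' n ⊆ S n \ D n) ∧ IsQuasiStrategy .II (K + 2) S S'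

/-- The positions of `S` from which Player I cannot force the play into `D`. -/
def safePart (K : ℕ) (D S : X.PosSet) : X.PosSet := S \ Forces .I S (late K D)

/-- The first auxiliary move of the unravelling game, made by Player I after the position
`p : X.pos (K + 1)`: a quasi-strategy to which he will stick. -/
structure IsRegion (S : X.PosSet) (p : X.pos (K + 1)) : Prop where
  isQuasiStrategy : IsQuasiStrategy .I (K + 1) ⊤ S
  mem : p ∈ S (K + 1)

/-- A position of length `n` together with the auxiliary moves: Player I's move of length `K`
also names a region, and Player II's next move a reply. -/
@[ext]
structure Decorated (X : Arena.{u}) (K n : ℕ) : Type u where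
  base : X.pos n
  region : K < n → X.PosSet
  reply : K + 1 < n → X.Reply

/-- The predecessor of a decorated position. -/
def Decorated.parent (r : Decorated X K (n + 1)) : Decorated X K n where
  base := X.parent r.base
  region h := r.region (Nat.lt_succ_of_lt h)
  reply h := r.reply (Nat.lt_succ_of_lt h)

/-- The decoration of a position by given auxiliary moves, as far as they have been made. -/
def decorate (K : ℕ) (S : X.PosSet) (o : X.Reply) (p : X.pos n) : Decorated X K n :=
  ⟨p, fun _ => S, fun _ => o⟩

/-- The decorated positions that obey the rules of the unravelling game. -/
structure Legal (D : X.PosSet) (r : Decorated X K n) : Prop where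
  region : ∀ h : K < n, IsRegion (r.region h) (playThrough r.base (K + 1))
  reply : ∀ h : K + 1 < n, (r.reply h).Allowed K D (r.region (K.lt_succ_self.trans h)) ∧
    ∀ j ∈ Icc (K + 2) n, playThrough r.base j ∈ (r.reply h).Permits j

section Unravel

variable {K : ℕ} {D S S' : X.PosSet} {o o' : X.Reply} {x : X.Play}

theorem allowed_safePart (hS : IsQuasiStrategy .I (K + 1) ⊤ S) :
    (Reply.avoid (safePart K D S)).Allowed K D S :=
  ⟨fun _ hn _ hp => ⟨hp.1, fun hD => hp.2 (mem_forces_of_mem ⟨hn, hD⟩)⟩,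
    (hS.diff_forces (late K D)).mono (Nat.le_succ _)⟩

theorem exists_allowed (hK : Even K) {p : X.pos (K + 1)} (hS : IsRegion S p) :
    ∃ (o : X.Reply) (q : X.pos (K + 2)), o.Allowed K D S ∧ X.parent q = p ∧
      q ∈ o.Permits (K + 2) := by
  by_cases hp : p ∈ Forces .I S (late K D) (K + 1)
  · obtain ⟨σ, hσ⟩ := hp
    obtain ⟨x, rfl, hxσ⟩ := exists_play_through σ p
    obtain ⟨m, hm, hmS⟩ := hσ x rfl fun n hn _ => hxσ n hn.1
    refine ⟨.reach m x, x (K + 2), ⟨hm.mem, fun j hj => ?_⟩, x.parent_succ _, fun _ => rfl⟩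
    rcases hj.1.eq_or_lt with rfl | hlt
    · exact hS.mem
    · exact hmS j ⟨hlt, hj.2⟩
  · obtain ⟨q, hqp, hq⟩ := (hS.isQuasiStrategy.diff_forces (late K D)).exists_move (K + 1) le_rfl
      hK.add_one p ⟨hS.mem, hp⟩
    exact ⟨.avoid (safePart K D S), q, allowed_safePart hS.isQuasiStrategy, hqp, hq⟩

theorem Reply.Allowed.exists_child (ho : o.Allowed K D S) (hS : IsQuasiStrategy .I (K + 1) ⊤ S)
    (hn : K + 2 ≤ n) {p : X.pos n} (hp : p ∈ o.Permits n) :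
    ∃ q, X.parent q = p ∧ q ∈ o.Permits (n + 1) := by
  cases o with
  | reach m v =>
    by_cases hnm : n + 1 ≤ m
    · exact ⟨v (n + 1), by rw [v.parent_succ, hp (n.le_succ.trans hnm)], fun _ => rfl⟩
    · obtain ⟨q, hq⟩ := X.exists_child p
      exact ⟨q, hq, fun h => absurd h hnm⟩
  | avoid S' =>
    rcases Nat.even_or_odd n with hI | hII
    · obtain ⟨q, rfl, hq⟩ := hS.exists_move n (by omega) hI p (ho.1 n hn hp).1
      exact ⟨q, rfl, ho.2.mem_of_opponent n hn (Nat.not_odd_iff_even.2 hI) q hp hq⟩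
    · exact ho.2.exists_move n hn hII p hp

theorem decorate_congr {p : X.pos n} (hS : K < n → S = S') (ho : K + 1 < n → o = o') :
    decorate K S o p = decorate K S' o' p :=
  Decorated.ext rfl (funext hS) (funext ho)

theorem exists_eq_decorate (r : Decorated X K n) :
    ∃ (S : X.PosSet) (o : X.Reply) (x : X.Play), r = decorate K S o (x n) := by
  obtain ⟨S, hS⟩ : ∃ S : X.PosSet, ∀ h, r.region h = S := by
    by_cases h : K < n
    · exact ⟨r.region h, fun _ => rfl⟩
    · exact ⟨⊤, fun h' => absurd h' h⟩
  obtain ⟨o, ho⟩ : ∃ o : X.Reply, ∀ h, r.reply h = o := by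
    by_cases h : K + 1 < n
    · exact ⟨r.reply h, fun _ => rfl⟩
    · exact ⟨.avoid ⊤, fun h' => absurd h' h⟩
  exact ⟨S, o, playThrough r.base,
    Decorated.ext (playThrough_self _).symm (funext hS) (funext ho)⟩

theorem legal_decorate_iff (x : X.Play) :
    Legal D (decorate K S o (x n)) ↔ (K < n → IsRegion S (x (K + 1))) ∧
      (K + 1 < n → o.Allowed K D S ∧ ∀ j ∈ Icc (K + 2) n, x j ∈ o.Permits j) := by
  have hthrough : ∀ j ≤ n, playThrough (decorate K S o (x n)).base j = x j :=
    fun j hj => playThrough_of_le x hj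
  have hpermits : (∀ j ∈ Icc (K + 2) n, playThrough (decorate K S o (x n)).base j ∈ o.Permits j) ↔
      ∀ j ∈ Icc (K + 2) n, x j ∈ o.Permits j :=
    forall₂_congr fun j hj => by rw [hthrough j hj.2]
  refine ⟨fun h => ⟨fun hn => hthrough _ hn ▸ h.region hn, fun hn => ⟨(h.reply hn).1,
    hpermits.1 (h.reply hn).2⟩⟩, fun h => ⟨fun hn => (hthrough _ hn).symm ▸ h.1 hn,
    fun hn => ⟨(h.2 hn).1, hpermits.2 (h.2 hn).2⟩⟩⟩

theorem legal_of_le (hn : n ≤ K) (r : Decorated X K n) : Legal D r :=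
  ⟨fun h => absurd h (not_lt.2 hn), fun h => absurd h (by omega)⟩

theorem legal_decorate_succ_iff (x : X.Play) :
    Legal D (decorate K S o (x (n + 1))) ↔ Legal D (decorate K S o (x n)) ∧
      (n = K → IsRegion S (x (K + 1))) ∧
      (K < n → o.Allowed K D S ∧ x (n + 1) ∈ o.Permits (n + 1)) := by
  rw [legal_decorate_iff, legal_decorate_iff]
  refine ⟨fun h => ⟨⟨fun hn => h.1 (by omega), fun hn => ⟨(h.2 (by omega)).1, fun j hj =>
      (h.2 (by omega)).2 j ⟨hj.1, hj.2.trans n.le_succ⟩⟩⟩, fun hn => h.1 (by omega),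
      fun hn => ⟨(h.2 (by omega)).1, (h.2 (by omega)).2 _ ⟨by omega, le_rfl⟩⟩⟩,
    fun h => ⟨fun hn => ?_, fun hn => ⟨(h.2.2 (by omega)).1, fun j hj => ?_⟩⟩⟩
  · rcases (Nat.le_of_lt_succ hn).eq_or_lt with rfl | hlt
    · exact h.2.1 rfl
    · exact h.1.1 hlt
  · rcases hj.2.eq_or_lt with rfl | hlt
    · exact (h.2.2 (by omega)).2
    · exact (h.1.2 (by have := hj.1; omega)).2 j ⟨hj.1, Nat.le_of_lt_succ hlt⟩

theorem Legal.parent {r : Decorated X K (n + 1)} (hr : Legal D r) : Legal D r.parent := by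
  obtain ⟨S, o, x, rfl⟩ := exists_eq_decorate r
  have hparent : (decorate K S o (x (n + 1))).parent = decorate K S o (x n) :=
    Decorated.ext (x.parent_succ n) rfl rfl
  rw [hparent]
  exact ((legal_decorate_succ_iff x).1 hr).1

theorem Legal.exists_child_of {p : X.pos n} {q : X.pos (n + 1)} (hp : Legal D (decorate K S o p))
    (hq : X.parent q = p) (hS : K < n → S = S') (ho : K + 1 < n → o = o')
    (hregion : n = K → S' = ⊤) (hreply : K < n → o'.Allowed K D S' ∧ q ∈ o'.Permits (n + 1)) :
    ∃ r : Decorated X K (n + 1), Legal D r ∧ r.parent = decorate K S o p := by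
  have hqp : playThrough q n = p := by rw [← Play.parent_succ, playThrough_self, hq]
  have hparent : (decorate K S' o' q).parent = decorate K S' o' p := Decorated.ext hq rfl rfl
  rw [decorate_congr hS ho] at hp ⊢
  refine ⟨decorate K S' o' q, ?_, hparent⟩
  rw [← playThrough_self q, legal_decorate_succ_iff, hqp, playThrough_self]
  exact ⟨hp, fun hn => hregion hn ▸ ⟨isQuasiStrategy_top, trivial⟩, hreply⟩

theorem Legal.exists_child (hK : Even K) {r : Decorated X K n} (hr : Legal D r) :
    ∃ q : Decorated X K (n + 1), Legal D q ∧ q.parent = r := by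
  obtain ⟨S, o, x, rfl⟩ := exists_eq_decorate r
  obtain ⟨hregion, hreply⟩ := (legal_decorate_iff x).1 hr
  obtain ⟨q, hq⟩ := X.exists_child (x n)
  rcases lt_trichotomy n K with hn | rfl | hn
  · exact hr.exists_child_of hq (fun _ => rfl) (fun _ => rfl) (by omega) (by omega)
  · exact hr.exists_child_of (o' := o) hq (by omega) (fun _ => rfl) (fun _ => rfl) (by omega)
  rcases (Nat.succ_le_of_lt hn).eq_or_lt with rfl | hn'
  · obtain ⟨o', q, ho', hq, hqo'⟩ := exists_allowed (D := D) hK (hregion hn)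
    exact hr.exists_child_of hq (fun _ => rfl) (by omega) (by omega) fun _ => ⟨ho', hqo'⟩
  · obtain ⟨ho, hpermits⟩ := hreply hn'
    obtain ⟨q, hq, hqo⟩ := ho.exists_child (hregion hn).isQuasiStrategy hn'
      (hpermits n ⟨hn', le_rfl⟩)
    exact hr.exists_child_of hq (fun _ => rfl) (fun _ => rfl) (by omega) fun _ => ⟨ho, hqo⟩

/-- The arena of the unravelling game. -/
def unravel (D : X.PosSet) (hK : Even K) : Arena.{u} where
  pos n := {r : Decorated X K n // Legal D r}
  parent r := ⟨r.1.parent, r.2.parent⟩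
  exists_child r := by
    obtain ⟨q, hq, hqr⟩ := r.2.exists_child hK
    exact ⟨⟨q, hq⟩, Subtype.ext hqr⟩

/-- Forgetting the auxiliary moves. -/
def unravelHom (D : X.PosSet) (hK : Even K) : Hom (unravel D hK) X where
  map r := r.1.base
  parent_map _ := rfl

theorem bijective_unravelHom {hK : Even K} (hn : n ≤ K) :
    Function.Bijective ((unravelHom D hK).map (n := n)) :=
  ⟨fun _ _ h => Subtype.ext (Decorated.ext h (funext fun h => absurd h (by omega))
      (funext fun h => absurd h (by omega))),
    fun p => ⟨⟨decorate K ⊤ (.avoid ⊤) p, legal_of_le hn _⟩, rfl⟩⟩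

variable {hK : Even K} {σ τ : (unravel D hK).Strategy}

open Classical in
/-- The strategy playing the moves of `σ` at the positions decorated with `S` and `o`; it is
arbitrary where the decorated position is not legal. -/
noncomputable def simulate (σ : (unravel D hK).Strategy) (S : X.PosSet) (o : X.Reply) :
    X.Strategy where
  move n p := if h : Legal D (decorate K S o p) then (σ n ⟨_, h⟩).1.base
    else Classical.arbitrary X.Strategy n p
  parent_move n p := by
    split_ifs with h
    · exact congrArg (fun r => r.1.base) (σ.parent_move n ⟨_, h⟩)
    · exact Strategy.parent_move _ n p

/-- The region named by `σ`. -/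
def regionOf (σ : (unravel D hK).Strategy) (p : X.pos K) : X.PosSet :=
  (σ K ⟨decorate K ⊤ (.avoid ⊤) p, legal_of_le le_rfl _⟩).1.region (Nat.lt_succ_self K)

open Classical in
/-- The reply of `σ` to the region `S`; it is arbitrary unless `S` is a region at `p`. -/
noncomputable def replyOf (σ : (unravel D hK).Strategy) (S : X.PosSet) (p : X.pos (K + 1)) :
    X.Reply :=
  if h : Legal D (decorate K S (.avoid ⊤) p) then
    (σ (K + 1) ⟨_, h⟩).1.reply (Nat.lt_succ_self (K + 1)) else .avoid ⊤

/-- The auxiliary moves `S` and `o` are made according to `σ`, as far as they are up to the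
player `i`. -/
structure Matches (i : Player) (σ : (unravel D hK).Strategy) (S : X.PosSet) (o : X.Reply)
    (x : X.Play) : Prop where
  region : i.Moves K → S = regionOf σ (x K)
  reply : i.Moves (K + 1) → o = replyOf σ S (x (K + 1))

theorem simulate_of_legal {p : X.pos n} (h : Legal D (decorate K S o p)) :
    simulate σ S o n p = (σ n ⟨_, h⟩).1.base :=
  dif_pos h

theorem simulate_decoration_congr (hS : K < n → S = S') (ho : K + 1 < n → o = o') :
    simulate σ S o n = simulate σ S' o' n := by
  funext p
  dsimp only [simulate]
  rw [decorate_congr hS ho]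

theorem simulate_congr (h : σ n = τ n) : simulate σ S o n = simulate τ S o n := by
  funext p
  simp only [simulate, h]

theorem regionOf_congr (h : σ K = τ K) : regionOf σ = regionOf τ := by
  funext p
  simp only [regionOf, h]

theorem replyOf_congr (h : σ (K + 1) = τ (K + 1)) : replyOf σ = replyOf τ := by
  funext S p
  simp only [replyOf, h]

theorem move_eq_decorate (hM : Matches i σ S o x) (h : Legal D (decorate K S o (x n)))
    (hn : i.Moves n) : (σ n ⟨_, h⟩).1 = decorate K S o (simulate σ S o n (x n)) := by
  have hparent := congrArg Subtype.val (σ.parent_move n ⟨_, h⟩)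
  have hcongr : ∀ {r r' : Decorated X K n} (hr : Legal D r) (hr' : Legal D r'), r = r' →
      (σ n ⟨r, hr⟩).1 = (σ n ⟨r', hr'⟩).1 := by
    rintro r _ hr hr' rfl
    rfl
  refine Decorated.ext (simulate_of_legal h).symm (funext fun hn' => ?_) (funext fun hn' => ?_)
  · rcases (Nat.le_of_lt_succ hn').eq_or_lt with rfl | hlt
    · refine Eq.trans ?_ (hM.region hn).symm
      exact congrFun (congrArg Decorated.region (hcongr h (legal_of_le le_rfl _)
        (decorate_congr (by omega) (by omega)))) hn'
    · exact congrFun (congrArg Decorated.region hparent) hlt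
  · rcases (Nat.le_of_lt_succ hn').eq_or_lt with rfl | hlt
    · have hdec : decorate K S o (x (K + 1)) = decorate K S (.avoid ⊤) (x (K + 1)) :=
        decorate_congr (fun _ => rfl) (by omega)
      refine Eq.trans ?_ ((hM.reply hn).trans (dif_pos (hdec ▸ h))).symm
      exact congrFun (congrArg Decorated.reply (hcongr h (hdec ▸ h) hdec)) hn'
    · exact congrFun (congrArg Decorated.reply hparent) hlt

theorem Matches.legal_succ (hM : Matches i σ S o x) (h : Legal D (decorate K S o (x n)))
    (hn : i.Moves n) : Legal D (decorate K S o (simulate σ S o n (x n))) :=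
  move_eq_decorate hM h hn ▸ (σ n ⟨_, h⟩).2

theorem Matches.exists_lift (hM : Matches i σ S o x) (hleg : ∀ n, Legal D (decorate K S o (x n)))
    (hx : Follows i (simulate σ S o) x) :
    ∃ y : (unravel D hK).Play, Follows i σ y ∧ (unravelHom D hK).play y = x := by
  refine ⟨⟨fun n => ⟨decorate K S o (x n), hleg n⟩, fun n => Subtype.ext ?_⟩,
    fun n hn hi => Subtype.ext ?_, rfl⟩
  · exact Decorated.ext (x.parent_succ n) rfl rfl
  · refine Eq.trans ?_ (move_eq_decorate hM (hleg n) hi).symm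
    exact congrArg (decorate K S o) (hx n hn hi)

theorem followsOn_simulate_Iio (hx : FollowsOn i (simulate σ S o) (Iio (K + 1)) x) :
    FollowsOn i (simulate σ S' o') (Iio (K + 1)) x := fun n hn hi => by
  have hn' : n < K + 1 := hn
  rw [hx n hn hi, simulate_decoration_congr (by omega) (by omega)]

/-- Below its final length, a `reach` reply determines the moves. -/
theorem Matches.exists_lift_reach {v : X.Play} (hM : Matches i σ S (.reach m v) x)
    (hS : IsRegion S (x (K + 1))) (ho : (Reply.reach m v).Allowed K D S) (hv : v m = x m)
    (hbefore : FollowsOn i (simulate σ ⊤ (.avoid ⊤)) (Iio (K + 1)) x)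
    (hafter : FollowsOn i (simulate σ S (.reach m v)) (Ici m) x) :
    ∃ y : (unravel D hK).Play, Follows i σ y ∧ (unravelHom D hK).play y = x := by
  have hleg : ∀ n, Legal D (decorate K S (.reach m v) (x n)) := fun n =>
    (legal_decorate_iff x).2 ⟨fun _ => hS, fun _ => ⟨ho, fun j _ hjm =>
      (Play.eq_of_le hjm hv).symm⟩⟩
  refine hM.exists_lift hleg fun n _ hi => ?_
  rcases lt_or_ge n (K + 1) with hnK | hnK
  · exact followsOn_simulate_Iio hbefore n hnK hi
  rcases lt_or_ge n m with hnm | hnm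
  · have hforced := ((hM.legal_succ (hleg n) hi).reply (by omega)).2 (n + 1) ⟨by omega, le_rfl⟩ hnm
    rw [playThrough_self] at hforced
    exact (Play.eq_of_le hnm hv.symm).trans hforced.symm
  · exact hafter n hnm hi

/-- The strategy of Player I from length `K + 1` on, if `σ` has named the region `S`: assume that
Player II replies by the safe part of `S` until `D` can be forced; then force `D`, and pretend
that Player II had named the resulting position in advance. -/
noncomputable def pursueFst (σ : (unravel D hK).Strategy) (S : X.PosSet) : X.Strategy :=
  pursue .I S (late K D) (K + 1) (simulate σ S (.avoid (safePart K D S)))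
    fun m q => simulate σ S (.reach m (playThrough q))

/-- Player II, who replies to the regions at `p` by `s`, would name a play through `q` if `S` were
the region. -/
def Proposes (s : X.PosSet → X.Reply) (p : X.pos (K + 1)) (q : X.pos m) (S : X.PosSet) : Prop :=
  IsRegion S p ∧ ∃ v : X.Play, s S = .reach m v ∧ v m = q

/-- The positions through which Player II would name a play in reply to some region at `p`. -/
def proposed (s : X.PosSet → X.Reply) (p : X.pos (K + 1)) : X.PosSet :=
  fun _ => {q | ∃ S, Proposes s p q S}

/-- The largest region in which Player II proposes to reach no position. -/
def unproposed (s : X.PosSet → X.Reply) (p : X.pos (K + 1)) : X.PosSet :=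
  ⊤ \ Forces .II ⊤ (proposed s p)

/-- The strategy of Player II from length `K + 1` on, if `σ` replies to the regions at `p` by `s`:
assume that Player I has named the region `unproposed s p` until a proposed position can be
forced; then force one, and pretend that Player I had named the corresponding region. -/
noncomputable def pursueSnd (σ : (unravel D hK).Strategy) (s : X.PosSet → X.Reply)
    (p : X.pos (K + 1)) : X.Strategy :=
  pursue .II ⊤ (proposed s p) (K + 1) (simulate σ (unproposed s p) (s (unproposed s p)))
    fun _ q => simulate σ (Classical.epsilon (Proposes s p q))
      (s (Classical.epsilon (Proposes s p q)))

/-- The continuation of the strategy induced by `σ` at a position of length `K + 1`. -/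
noncomputable def followUp (σ : (unravel D hK).Strategy) (p : X.pos (K + 1)) :
    Player → X.Strategy
  | .I => pursueFst σ (regionOf σ (X.parent p))
  | .II => pursueSnd σ (fun S => replyOf σ S p) p

/-- The strategy on `X` induced by a strategy for the unravelling game. -/
noncomputable def unravelPush (i : Player) (σ : (unravel D hK).Strategy) : X.Strategy :=
  (simulate σ ⊤ (.avoid ⊤)).branch (K + 1) fun p => followUp σ p i

theorem unravelPush_local (i : Player) {N : ℕ} (h : ∀ n < N, σ n = τ n) :
    ∀ n < N, unravelPush i σ n = unravelPush i τ n := by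
  refine fun n hn => Strategy.branch_congr (simulate_congr (h n hn)) fun p hKn => ?_
  cases i with
  | I =>
    simp only [followUp, regionOf_congr (h K (by omega))]
    exact pursue_congr (simulate_congr (h n hn)) fun _ _ => simulate_congr (h n hn)
  | II =>
    simp only [followUp, replyOf_congr (h (K + 1) (by omega))]
    exact pursue_congr (simulate_congr (h n hn)) fun _ _ => simulate_congr (h n hn)

theorem mem_region_of_followsOn (hS : IsRegion S (x (K + 1))) {a : ℕ}
    (hM : Matches .I σ S (.avoid (safePart K D S)) x)
    (hx : FollowsOn .I (simulate σ S (.avoid (safePart K D S))) (Ico (K + 1) a) x)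
    (hF : ∀ n ∈ Ico (K + 1) a, x n ∉ Forces .I S (late K D) n) :
    ∀ n ∈ Icc (K + 1) a, x n ∈ S n := by
  suffices h : ∀ n ≥ K + 1, n ≤ a → ∀ j ∈ Icc (K + 1) n, x j ∈ S j from
    fun n hn => h n hn.1 hn.2 n ⟨hn.1, le_rfl⟩
  intro n hn
  induction n, hn using Nat.le_induction with
  | base => exact fun _ j hj => le_antisymm hj.2 hj.1 ▸ hS.mem
  | succ n hn ih =>
    intro hna j hj
    have hmem := ih (n.le_succ.trans hna)
    rcases hj.2.lt_or_eq with hlt | rfl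
    · exact hmem j ⟨hj.1, Nat.le_of_lt_succ hlt⟩
    by_cases hi : Player.I.Moves n
    · have hleg : Legal D (decorate K S (.avoid (safePart K D S)) (x n)) :=
        (legal_decorate_iff x).2 ⟨fun _ => hS, fun _ => ⟨allowed_safePart hS.isQuasiStrategy,
          fun j hj => ⟨hmem j ⟨by have := hj.1; omega, hj.2⟩,
            hF j ⟨by have := hj.1; omega, by have := hj.2; omega⟩⟩⟩⟩
      have hsucc := hM.legal_succ hleg hi
      rw [← hx n ⟨hn, hna⟩ hi, legal_decorate_succ_iff] at hsucc
      exact (hsucc.2.2 hn).2.1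
    · exact hS.isQuasiStrategy.mem_of_opponent n hn hi _
        (by rw [x.parent_succ]; exact hmem n ⟨hn, le_rfl⟩) trivial

theorem exists_lift_fst (hx : Follows .I (unravelPush .I σ) x) :
    ∃ y : (unravel D hK).Play, Follows .I σ y ∧ (unravelHom D hK).play y = x := by
  have hbefore : FollowsOn .I (simulate σ ⊤ (.avoid ⊤)) (Iio (K + 1)) x :=
    hx.of_branch_lt.mono fun _ hn => ⟨trivial, hn⟩
  have hafter : FollowsOn .I (followUp σ (x (K + 1)) .I) (Ici (K + 1)) x :=
    hx.of_branch_le.mono fun _ hn => ⟨trivial, hn⟩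
  simp only [followUp, x.parent_succ] at hafter
  obtain ⟨S, hSσ⟩ : ∃ S, S = regionOf σ (x K) := ⟨_, rfl⟩
  rw [← hSσ] at hafter
  have hM : ∀ o, Matches .I σ S o x := fun _ =>
    ⟨fun _ => hSσ, fun h => absurd h (Nat.not_even_iff_odd.2 hK.add_one)⟩
  have hS : IsRegion S (x (K + 1)) := by
    have hsucc := (hM (.avoid ⊤)).legal_succ (legal_of_le le_rfl _) hK
    rw [← followsOn_simulate_Iio hbefore K K.lt_succ_self hK, legal_decorate_succ_iff] at hsucc
    exact hsucc.2.1 rfl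
  rcases hafter.pursue_cases with ⟨hF, hfollow⟩ | ⟨a, b, ha, hb, hfollow, hR, hfinal⟩
  · have hmem : ∀ n ≥ K + 1, x n ∈ S n := fun n hn =>
      mem_region_of_followsOn hS (hM _) (hfollow.mono Ico_subset_Ici_self)
        (fun m hm => hF m hm.1) n ⟨hn, le_rfl⟩
    refine (hM (.avoid (safePart K D S))).exists_lift (fun n => (legal_decorate_iff x).2
      ⟨fun _ => hS, fun _ => ⟨allowed_safePart hS.isQuasiStrategy, fun j hj =>
        have hj' : K + 1 ≤ j := (Nat.le_succ _).trans hj.1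
        ⟨hmem j hj', hF j hj'⟩⟩⟩) fun n _ => ?_
    exact (lt_or_ge n (K + 1)).elim (followsOn_simulate_Iio hbefore n) (hfollow n)
  · have hmem : ∀ n ∈ Icc (K + 1) b, x n ∈ S n := fun n hn => (le_or_gt n a).elim
      (fun hna => mem_region_of_followsOn hS (hM _) hfollow ha.notMem n ⟨hn.1, hna⟩)
      (fun han => hR n ⟨han, hn.2⟩)
    refine (hM _).exists_lift_reach hS ⟨?_, fun j hj => ?_⟩ (playThrough_self _) hbefore hfinal
    · rw [playThrough_self]
      exact hb.mem
    · rw [playThrough_of_le x hj.2]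
      exact hmem j hj

theorem allowed_replyOf {p : X.pos (K + 1)} (hS : IsRegion S p) :
    (replyOf σ S p).Allowed K D S := by
  have h : Legal D (decorate K S (.avoid ⊤) p) := by
    rw [← playThrough_self p]
    exact (legal_decorate_iff _).2 ⟨fun _ => by rwa [playThrough_self], by omega⟩
  have hM : Matches .II σ S (replyOf σ S p) (playThrough p) :=
    ⟨fun hII => absurd hK (Nat.not_even_iff_odd.2 hII), fun _ => by rw [playThrough_self]⟩
  have hleg : Legal D (decorate K S (replyOf σ S p) (playThrough p (K + 1))) := by
    rw [playThrough_self]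
    rwa [decorate_congr (o' := .avoid ⊤) (fun _ => rfl) fun h => absurd h (lt_irrefl _)]
  have hsucc := hM.legal_succ hleg hK.add_one
  exact (hsucc.reply (K + 1).lt_succ_self).1

theorem isRegion_unproposed (s : X.PosSet → X.Reply) {p : X.pos (K + 1)}
    (hp : p ∉ Forces .II ⊤ (proposed s p) (K + 1)) : IsRegion (unproposed s p) p :=
  ⟨isQuasiStrategy_top.diff_forces (i := .II) _, trivial, hp⟩

theorem exists_eq_avoid_of_isRegion_unproposed {p : X.pos (K + 1)}
    (hS : IsRegion (unproposed (fun S => replyOf σ S p) p) p) :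
    ∃ S', replyOf σ (unproposed (fun S => replyOf σ S p) p) p = .avoid S' := by
  have hallowed := allowed_replyOf (σ := σ) hS
  cases ho : replyOf σ (unproposed (fun S => replyOf σ S p) p) p with
  | avoid S' => exact ⟨S', rfl⟩
  | reach m v =>
    rw [ho] at hallowed
    have hm : v m ∈ unproposed (fun S => replyOf σ S p) p m :=
      hallowed.2 m ⟨(Nat.le_succ _).trans hallowed.1.1, le_rfl⟩
    have hprop : v m ∈ proposed (fun S => replyOf σ S p) p m := ⟨_, hS, v, ho, rfl⟩
    exact absurd (mem_forces_of_mem hprop) hm.2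

theorem Matches.exists_lift_avoid (hM : Matches .II σ S (.avoid S') x)
    (hS : IsRegion S (x (K + 1))) (ho : (Reply.avoid S').Allowed K D S)
    (hmem : ∀ n ≥ K + 1, x n ∈ S n) (hx : Follows .II (simulate σ S (.avoid S')) x) :
    ∃ y : (unravel D hK).Play, Follows .II σ y ∧ (unravelHom D hK).play y = x := by
  refine hM.exists_lift (fun n => ?_) hx
  induction n with
  | zero => exact legal_of_le K.zero_le _
  | succ n ih =>
    by_cases hi : Player.II.Moves n
    · rw [hx n trivial hi]
      exact hM.legal_succ ih hi
    refine (legal_decorate_succ_iff x).2 ⟨ih, fun _ => hS, fun hKn => ⟨ho, ?_⟩⟩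
    have hn : K + 1 ≠ n := fun h => hi (h ▸ hK.add_one)
    refine ho.2.mem_of_opponent n (by omega) hi _ ?_ (hmem (n + 1) (by omega))
    rw [x.parent_succ]
    exact (((legal_decorate_iff x).1 ih).2 (by omega)).2 n ⟨by omega, le_rfl⟩

theorem exists_lift_snd (hx : Follows .II (unravelPush .II σ) x) :
    ∃ y : (unravel D hK).Play, Follows .II σ y ∧ (unravelHom D hK).play y = x := by
  have hbefore : FollowsOn .II (simulate σ ⊤ (.avoid ⊤)) (Iio (K + 1)) x :=
    hx.of_branch_lt.mono fun _ hn => ⟨trivial, hn⟩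
  have hafter : FollowsOn .II (followUp σ (x (K + 1)) .II) (Ici (K + 1)) x :=
    hx.of_branch_le.mono fun _ hn => ⟨trivial, hn⟩
  have hM : ∀ {S o}, o = replyOf σ S (x (K + 1)) → Matches .II σ S o x := fun ho =>
    ⟨fun hII => absurd hK (Nat.not_even_iff_odd.2 hII), fun _ => ho⟩
  rcases hafter.pursue_cases with ⟨hF, hfollow⟩ | ⟨a, b, -, hb, -, -, hfinal⟩
  · have hS := isRegion_unproposed (fun S => replyOf σ S (x (K + 1))) (hF (K + 1) le_rfl)
    obtain ⟨S', ho⟩ := exists_eq_avoid_of_isRegion_unproposed hS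
    simp only [ho] at hfollow
    refine (hM ho.symm).exists_lift_avoid hS (ho ▸ allowed_replyOf hS)
      (fun n hn => ⟨trivial, hF n hn⟩) fun n _ => ?_
    exact (lt_or_ge n (K + 1)).elim (followsOn_simulate_Iio hbefore n) (hfollow n)
  · have hspec := Classical.epsilon_spec hb.mem
    generalize Classical.epsilon (Proposes (fun S => replyOf σ S (x (K + 1))) (x (K + 1)) (x b)) = S
      at hspec hfinal
    obtain ⟨hS, v, ho, hv⟩ := hspec
    have hallowed := allowed_replyOf (σ := σ) hS
    simp only [ho] at hfinal hallowed
    exact (hM ho.symm).exists_lift_reach hS hallowed hv hbefore hfinal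

theorem simulate_base (r : Decorated X K n) (hr : Legal D r) (hn : n ≤ K) :
    simulate σ S o n r.base = (σ n ⟨r, hr⟩).1.base := by
  obtain ⟨S', o', x, rfl⟩ := exists_eq_decorate r
  have hsim : simulate σ S o n = simulate σ S' o' n :=
    simulate_decoration_congr (by omega) (by omega)
  exact (congrFun hsim _).trans (simulate_of_legal hr)

/-- The covering given by the unravelling game. -/
noncomputable def unravelCovering (D : X.PosSet) (hK : Even K) : Covering K (unravel D hK) X where
  toHom := unravelHom D hK
  push := unravelPush
  push_local i _ _ _ := unravelPush_local i
  exists_lift {i _ _} hx := match i with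
    | .I => exists_lift_fst hx
    | .II => exists_lift_snd hx
  bijective _ hn := bijective_unravelHom hn
  push_map i σ n hn p := by
    rw [unravelPush, Strategy.branch_of_lt (hn.trans K.lt_succ_self)]
    exact simulate_base p.1 p.2 hn.le

theorem exists_decoration (y : (unravel D hK).Play) :
    ∃ S o, ∀ n, (y n).1 = decorate K S o ((unravelHom D hK).play y n) := by
  have hregion : ∀ n (h : K + 1 ≤ n), (y n).1.region h = (y (K + 1)).1.region K.lt_succ_self := by
    intro n h
    induction n, h using Nat.le_induction with
    | base => rfl
    | succ n h ih =>
      rw [← ih, ← y.parent_succ n]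
      rfl
  have hreply : ∀ n (h : K + 2 ≤ n),
      (y n).1.reply h = (y (K + 2)).1.reply (K + 1).lt_succ_self := by
    intro n h
    induction n, h using Nat.le_induction with
    | base => rfl
    | succ n h ih =>
      rw [← ih, ← y.parent_succ n]
      rfl
  exact ⟨_, _, fun n => Decorated.ext rfl (funext (hregion n)) (funext (hreply n))⟩

theorem mem_iff_exists_eq_reach {B : Set X.Play} (hB : IsOpen B)
    (hleg : ∀ n, Legal (decided B) (decorate K S o (x n))) :
    x ∈ B ↔ ∃ m v, o = .reach m v := by
  have hrules : ∀ n > K + 1, o.Allowed K (decided B) S ∧ x n ∈ o.Permits n := fun n hn =>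
    have h := ((legal_decorate_iff x).1 (hleg n)).2 hn
    ⟨h.1, h.2 n ⟨hn, le_rfl⟩⟩
  cases o with
  | reach m v =>
    obtain ⟨⟨hm, hv⟩, -⟩ := (hrules (K + 2) (by omega)).1
    rw [← (hrules m hm).2 le_rfl] at hv
    exact ⟨fun _ => ⟨m, v, rfl⟩, fun _ => mem_of_mem_decided hv⟩
  | avoid S' =>
    refine ⟨fun hx => ?_, by simp only [reduceCtorEq, exists_false, false_implies]⟩
    obtain ⟨n, hn⟩ := exists_mem_decided hB hx
    obtain ⟨hallowed, hpermits⟩ := hrules (max n (K + 2)) (by omega)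
    exact absurd (mem_decided_of_le (le_max_left n (K + 2)) hn)
      (hallowed.1 _ (le_max_right n (K + 2)) hpermits).2

theorem isClopen_setOf_seq (n : ℕ) (P : X.pos n → Prop) : IsClopen {x : X.Play | P (x n)} := by
  refine ⟨⟨fun x hx => ⟨n, fun y hy => ?_⟩⟩, fun x hx => ⟨n, fun y hy => ?_⟩⟩
  · change ¬ P (y n)
    rwa [hy]
  · change P (y n)
    rwa [hy]

theorem isClopen_preimage_unravelHom {B : Set X.Play} (hB : IsOpen B) (hK : Even K) :
    IsClopen ((unravelHom (decided B) hK).play ⁻¹' B) := by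
  have hreach : (unravelHom (decided B) hK).play ⁻¹' B =
      {y | ∃ m v, (y (K + 2)).1.reply (K + 1).lt_succ_self = .reach m v} := by
    ext y
    obtain ⟨S, o, hy⟩ := exists_decoration y
    rw [mem_preimage, mem_iff_exists_eq_reach hB fun n => hy n ▸ (y n).2, mem_ofPred, hy (K + 2)]
    rfl
  rw [hreach]
  exact isClopen_setOf_seq (K + 2) fun r : (unravel (decided B) hK).pos (K + 2) =>
    ∃ m v, r.1.reply (K + 1).lt_succ_self = .reach m v

end Unravel

theorem unravels_of_isOpen {B : Set X.Play} (hB : IsOpen B) : Unravels B := by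
  intro Y f k
  exact ⟨_, (unravelCovering (decided (f.play ⁻¹' B)) (even_two_mul k)).mono (by omega),
    isClopen_preimage_unravelHom (hB.preimage f.continuous_play) (even_two_mul k)⟩

theorem Unravels.iUnion {B : ℕ → Set X.Play} (h : ∀ j, Unravels (B j)) : Unravels (⋃ j, B j) := by
  intro Y f k
  choose Z c hc using fun j (s : Σ Y : Arena.{u}, Hom Y X) => h j s.1 s.2 (k + j)
  let s : ℕ → Σ Y : Arena.{u}, Hom Y X :=
    fun j => Nat.rec ⟨Y, f⟩ (fun j s => ⟨Z j s, s.2.comp (c j s).toHom⟩) j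
  let d : ∀ j, Covering (k + j) (s (j + 1)).1 (s j).1 := fun j => c j (s j)
  have hunion : IsOpen ((f.comp (limitProj (V := fun j => (s j).1) d 0)).play ⁻¹' ⋃ j, B j) :=
    isOpen_preimage_iUnion_limit (V := fun j => (s j).1) d (f := fun j => (s j).2) (fun _ => rfl)
      fun j => (hc j (s j)).isOpen
  obtain ⟨W, e, he⟩ := unravels_of_isOpen hunion _ (Hom.id _) k
  exact ⟨W, (limitCovering (V := fun j => (s j).1) d).comp e, he⟩

theorem unravels_of_measurableSet {B : Set X.Play} (hB : MeasurableSet[borel X.Play] B) :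
    Unravels B := by
  let unraveled : MeasurableSpace X.Play :=
    { MeasurableSet' := Unravels
      measurableSet_empty := unravels_of_isOpen isOpen_empty
      measurableSet_compl := fun _ => Unravels.compl
      measurableSet_iUnion := fun _ => Unravels.iUnion }
  exact MeasurableSpace.generateFrom_le (m := unraveled) (fun _ => unravels_of_isOpen) B hB

end Arena

/-! ### Games on trees of finite sequences -/

section Tree

variable {A : Type u} {T : Set (List A)}

theorem ofFn_succ_eq_append (x : ℕ → A) (n : ℕ) :
    (List.ofFn fun i : Fin (n + 1) => x i) = (List.ofFn fun i : Fin n => x i) ++ [x n] := by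
  rw [List.ofFn_succ', List.concat_eq_append]
  rfl

/-- The arena of a tree of finite sequences. -/
def treeArena (hT : IsTree T) : Arena.{u} where
  pos n := {p : List A // p ∈ T ∧ p.length = n}
  parent p := ⟨p.1.dropLast, hT.2.1 _ p.2.1 _ (List.dropLast_prefix _), by
    rw [List.length_dropLast, p.2.2, Nat.add_sub_cancel]⟩
  exists_child p := by
    obtain ⟨a, ha⟩ := hT.2.2 _ p.2.1
    exact ⟨⟨p.1 ++ [a], ha, by rw [List.length_append, p.2.2, List.length_singleton]⟩,
      Subtype.ext List.dropLast_concat⟩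

variable {hT : IsTree T} {n : ℕ}

instance : Subsingleton ((treeArena hT).pos 0) :=
  ⟨fun p q => Subtype.ext (by
    rw [List.length_eq_zero_iff.1 p.2.2, List.length_eq_zero_iff.1 q.2.2])⟩

/-- The last move leading to a position. -/
def lastMove (q : (treeArena hT).pos (n + 1)) : A :=
  q.1.getLast (List.ne_nil_of_length_eq_add_one q.2.2)

theorem parent_append_lastMove (q : (treeArena hT).pos (n + 1)) :
    ((treeArena hT).parent q).1 ++ [lastMove q] = q.1 :=
  List.dropLast_append_getLast _

theorem ofFn_lastMove (y : (treeArena hT).Play) (n : ℕ) :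
    (List.ofFn fun i : Fin n => lastMove (y (i + 1))) = (y n).1 := by
  induction n with
  | zero => rw [List.length_eq_zero_iff.1 (y 0).2.2, List.ofFn_zero]
  | succ n ih =>
    rw [ofFn_succ_eq_append fun i => lastMove (y (i + 1)), ih, ← parent_append_lastMove (y (n + 1)),
      y.parent_succ]

/-- The element of the canopy given by a play on the arena of a tree. -/
def ofPlay (y : (treeArena hT).Play) : canopy T :=
  ⟨fun n => lastMove (y (n + 1)), fun n => ofFn_lastMove y n ▸ (y n).2.1⟩

theorem continuous_ofPlay [TopologicalSpace A] : Continuous (ofPlay (hT := hT)) :=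
  Continuous.subtype_mk (continuous_pi fun n => ⟨fun U _ =>
    (Arena.isClopen_setOf_seq (n + 1) fun q => lastMove q ∈ U).isOpen⟩) _

/-- The play on the arena of a tree given by an element of the canopy. -/
def toPlay (hT : IsTree T) (x : canopy T) : (treeArena hT).Play where
  seq n := ⟨List.ofFn fun i : Fin n => x.1 i, x.2 n, List.length_ofFn⟩
  parent_succ n := Subtype.ext <| by
    change (List.ofFn fun i : Fin (n + 1) => x.1 i).dropLast = _
    rw [ofFn_succ_eq_append, List.dropLast_concat]

theorem ofPlay_toPlay (x : canopy T) : ofPlay (toPlay hT x) = x :=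
  Subtype.ext <| funext fun n =>
    (List.getLast_ofFn_succ fun i : Fin (n + 1) => x.1 i).trans rfl

theorem exists_forall_append_eq (σ : (treeArena hT).Strategy) :
    ∃ s : List A → A, ∀ (n : ℕ) (p : (treeArena hT).pos n), p.1 ++ [s p.1] = (σ n p).1 := by
  have hmove : ∀ (n : ℕ) (p : (treeArena hT).pos n), p.1 ++ [lastMove (σ n p)] = (σ n p).1 :=
    fun n p => by rw [← parent_append_lastMove (σ n p), σ.parent_move]
  have hex : ∀ p : List A, ∃ a : A, ∀ h : p ∈ T, p ++ [a] = (σ p.length ⟨p, h, rfl⟩).1 := by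
    intro p
    by_cases h : p ∈ T
    · exact ⟨_, fun _ => hmove p.length ⟨p, h, rfl⟩⟩
    · obtain ⟨q, hq⟩ := hT.1
      exact ⟨(hT.2.2 q hq).choose, fun h' => absurd h' h⟩
  choose s hs using hex
  refine ⟨s, ?_⟩
  rintro _ ⟨p, h, rfl⟩
  exact hs p h

theorem exists_list_strategy (σ : (treeArena hT).Strategy) :
    ∃ s : List A → A, (∀ p ∈ T, p ++ [s p] ∈ T) ∧
      ∀ (i : Player), ∀ x ∈ canopy T,
        (∀ n, i.Moves n → x n = s (List.ofFn fun j : Fin n => x j)) →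
          ∃ y, Arena.Follows i σ y ∧ (ofPlay y).1 = x := by
  obtain ⟨s, hs⟩ := exists_forall_append_eq σ
  refine ⟨s, fun p hp => hs p.length ⟨p, hp, rfl⟩ ▸ (σ _ _).2.1,
    fun i x hxT hx => ⟨toPlay hT ⟨x, hxT⟩, fun n _ hi => Subtype.ext ?_,
      congrArg Subtype.val (ofPlay_toPlay ⟨x, hxT⟩)⟩⟩
  rw [← hs]
  change (List.ofFn fun j : Fin (n + 1) => x j) = _
  rw [ofFn_succ_eq_append, hx n hi]
  rfl

theorem borel_determinacy [TopologicalSpace A] {W : Set (ℕ → A)} (hT : IsTree T)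
    (hW : BorelInCanopy T W) : (∃ s : List A → A, ValidI T s ∧ playsI T s ⊆ W) ∨
      ∃ s : List A → A, ValidII T s ∧ ∀ x ∈ playsII T s, x ∉ W := by
  have hborel : MeasurableSet[borel (treeArena hT).Play] (ofPlay ⁻¹' (Subtype.val ⁻¹' W)) :=
    continuous_ofPlay.borel_measurable hW
  refine (Arena.unravels_of_measurableSet hborel).determined.imp ?_ ?_
  · rintro ⟨σ, hσ⟩
    obtain ⟨s, hsT, hs⟩ := exists_list_strategy σ
    refine ⟨s, fun p hp _ => hsT p hp, fun x hx => ?_⟩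
    obtain ⟨y, hy, rfl⟩ := hs .I x hx.1 hx.2
    exact hσ y hy
  · rintro ⟨σ, hσ⟩
    obtain ⟨s, hsT, hs⟩ := exists_list_strategy σ
    refine ⟨s, fun p hp _ => hsT p hp, fun x hx hxW => ?_⟩
    obtain ⟨y, hy, rfl⟩ := hs .II x hx.1 hx.2
    exact hσ y hy hxW

end Tree

end BorelGame

theorem main_monotone_principle_general [TopologicalSpace A] {α : Type*} [CompleteLattice α]
    (T : Set (List A)) (hT : IsTree T) (ξ : Set (ℕ → A) → α)
    (hmono : ∀ C Z : Set (ℕ → A), C ⊆ Z → Z ⊆ canopy T → ξ C ≤ ξ Z)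
    (W : Set (ℕ → A)) (hWsub : W ⊆ canopy T)
    (hW : ξ W < ⨅ (s : List A → A) (_ : ValidI T s), ξ (playsI T s)) :
    (¬ ∃ s : List A → A, ValidI T s ∧ playsI T s ⊆ W) ∧
    ((BorelInCanopy T W ∨
        ∀ C : Set (ℕ → A), C ⊆ canopy T → ∃ Z : Set (ℕ → A),
          C ⊆ Z ∧ Z ⊆ canopy T ∧ BorelInCanopy T Z ∧ ξ C = ξ Z) →
      ∃ s : List A → A, ValidII T s ∧ ∀ x ∈ playsII T s, x ∉ W) := by
  have not_winsI : ∀ Z ⊆ canopy T, ξ W = ξ Z →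
      ¬ ∃ s : List A → A, ValidI T s ∧ playsI T s ⊆ Z := by
    rintro Z hZ hξ ⟨s, hs, hsZ⟩
    exact ((iInf₂_le s hs).trans (hmono _ _ hsZ hZ)).not_gt (hξ ▸ hW)
  have winsII_of_borel : ∀ Z ⊆ canopy T, ξ W = ξ Z → BorelInCanopy T Z →
      ∃ s : List A → A, ValidII T s ∧ ∀ x ∈ playsII T s, x ∉ Z := fun Z hZ hξ hB =>
    (BorelGame.borel_determinacy hT hB).resolve_left (not_winsI Z hZ hξ)
  refine ⟨not_winsI W hWsub rfl, ?_⟩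
  rintro (hB | hreg)
  · exact winsII_of_borel W hWsub rfl hB
  · obtain ⟨Z, hWZ, hZ, hB, hξ⟩ := hreg W hWsub
    obtain ⟨s, hs, hsZ⟩ := winsII_of_borel Z hZ hξ hB
    exact ⟨s, hs, fun x hx hxW => hsZ x hx (hWZ hxW)⟩

/-- Main principle: if `ξ` is monotone on subsets of the canopy and
`ξ W < inf over Player I strategies of ξ(⟦s_I⟧)`, then Player I has no winning strategy in
`(T,W)`; if moreover `W` is Borel in `⟦T⟧` or `ξ` is Borel regular, then Player II has a
winning strategy. -/
theorem main_monotone_principle [TopologicalSpace A] [DiscreteTopology A]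
    (T : Set (List A)) (hT : IsTree T)
    (ξ : Set (ℕ → A) → ℝ≥0∞)
    (hmono : ∀ C Z : Set (ℕ → A), C ⊆ Z → Z ⊆ canopy T → ξ C ≤ ξ Z)
    (W : Set (ℕ → A)) (hWsub : W ⊆ canopy T)
    (hW : ξ W < ⨅ (s : List A → A) (_ : ValidI T s), ξ (playsI T s)) :
    (¬ ∃ s : List A → A, ValidI T s ∧ playsI T s ⊆ W) ∧
    ((BorelInCanopy T W ∨
        ∀ C : Set (ℕ → A), C ⊆ canopy T → ∃ Z : Set (ℕ → A),
          C ⊆ Z ∧ Z ⊆ canopy T ∧ BorelInCanopy T Z ∧ ξ C = ξ Z) →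
      ∃ s : List A → A, ValidII T s ∧ ∀ x ∈ playsII T s, x ∉ W) :=
  main_monotone_principle_general T hT ξ hmono W hWsub hW
end
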